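/- arXiv:2312.16319 — 4 statements merged into one kernel-verified Lean document; each statement's English description precedes it below -/
import Mathlib

section
/- For every integer n ≥ 5 there exist elements x and y of the alternating group A_n such that the order of y is a prime number and for all g, h ∈ A_n, the subgroup of A_n generated by g⁻¹xg and h⁻¹yh is all of A_n. -/
/-!
Conjugation preserves cycle types, so it suffices to find two cycle types, one of them of prime
order, such that every subgroup `H` of `S_n` containing permutations of both types contains `A_n`.
The size of an `H`-invariant set is a sum of cycle lengths of each of the two permutations, which
makes `H` transitive. A nontrivial block of `H` that meets the support of a cycle of prime length
in `H` contains this support, and then is too large to be proper. So `H` is primitive, and Jordan's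
theorem on primitive groups containing a cycle of prime length `p ≤ n - 3` applies. For `n ≥ 6`,
Bertrand's postulate supplies an odd prime `p` with `⌊n / 2⌋ ≤ p ≤ n - 3`: take the types `(n)`,
`(p)` for odd `n`, the types `(n / 2, n / 2)`, `(p)` for even `n < 2 p`, and the types
`(3, 2 p - 3)`, `(p, p)`, which yield a `3`-cycle in `H`, for `n = 2 p`. For `n = 5`, the types
`(3)` and `(5)` will do.

The last choice fails for `p = 3`. For `n = 6`, the types `(4, 2)` and `(5)` force the order of
`H ∩ A_6` to be divisible by `60`, so its index in `A_6` is at most `6`. Were this subgroup proper,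
the simple group `A_6` would act faithfully on its cosets, and the element of type `(4, 2)`, which
fixes a coset, would act as a `4`-cycle, an odd permutation; but a simple group with an element of
order `4` has no nontrivial homomorphism to `{1, -1}`.

For Jordan's theorem, let `y` be the cycle. The group is multiply transitive enough to extend any
permutation `τ` fixing the support of `y` pointwise to an element `τ k` of the group, with `k`
supported there; by Sylow's theorem `k` can be chosen to normalize `⟨y⟩`. The commutator of two such
`k` centralizes `y`, hence is a power of `y`, so that the commutators of the `τ` lie in the group.
-/

open Equiv Equiv.Perm MulAction
open scoped Pointwise commutatorElement

section Group

variable {G : Type*} [Group G]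

theorem commute_commutatorElement_of_conj_mem_zpowers {u v y : G}
    (hu : u⁻¹ * y * u ∈ Subgroup.zpowers y) (hv : v⁻¹ * y * v ∈ Subgroup.zpowers y) :
    Commute ⁅u, v⁆ y := by
  obtain ⟨i, hi : y ^ i = _⟩ := hu
  obtain ⟨j, hj : y ^ j = _⟩ := hv
  have conj_zpow_eq (w : G) (l : ℤ) : w⁻¹ * y ^ l * w = (w⁻¹ * y * w) ^ l := by
    simpa using (conj_zpow (i := l) (a := w⁻¹) (b := y)).symm
  have conj_eq_conj : (u * v)⁻¹ * y * (u * v) = (v * u)⁻¹ * y * (v * u) :=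
    calc (u * v)⁻¹ * y * (u * v) = v⁻¹ * (u⁻¹ * y * u) * v := by group
      _ = y ^ (i * j) := by rw [← hi, conj_zpow_eq, ← hj, ← zpow_mul, mul_comm]
      _ = u⁻¹ * (v⁻¹ * y * v) * u := by rw [← hj, conj_zpow_eq, ← hi, ← zpow_mul]
      _ = (v * u)⁻¹ * y * (v * u) := by group
  calc ⁅u, v⁆ * y = u * v * ((v * u)⁻¹ * y * (v * u)) * (v * u)⁻¹ := by
        rw [commutatorElement_def]; group
    _ = y * ⁅u, v⁆ := by rw [← conj_eq_conj, commutatorElement_def]; group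

theorem commutatorElement_mul_mul_of_commute {a b u v : G} (hau : Commute a u) (hav : Commute a v)
    (hbu : Commute b u) (hbv : Commute b v) : ⁅a * u, b * v⁆ = ⁅a, b⁆ * ⁅u, v⁆ := by
  have commute_mul_inv : Commute (b * a)⁻¹ ⁅u, v⁆ :=
    ((hbu.mul_left hau).mul_right (hbv.mul_left hav) |>.mul_right
      (hbu.mul_left hau).inv_right |>.mul_right (hbv.mul_left hav).inv_right).inv_left
  calc ⁅a * u, b * v⁆ = a * u * (b * v) * (b * v * (a * u))⁻¹ := by
        rw [commutatorElement_def]; group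
    _ = a * b * (⁅u, v⁆ * (b * a)⁻¹) := by
        rw [hbu.symm.mul_mul_mul_comm, hav.symm.mul_mul_mul_comm, commutatorElement_def]; group
    _ = ⁅a, b⁆ * ⁅u, v⁆ := by rw [← commute_mul_inv.eq, commutatorElement_def]; group

theorem exists_conj_mem_zpowers_of_orderOf_eq [Finite G] {p : ℕ} (hp : p.Prime)
    (hG : ¬ p ^ 2 ∣ Nat.card G) {x y : G} (hx : orderOf x = p) (hy : orderOf y = p) :
    ∃ g : G, g * x * g⁻¹ ∈ Subgroup.zpowers y := by
  have := Fact.mk hp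
  have factorization_eq_one : (Nat.card G).factorization p = 1 := by
    have h1 : 1 ≤ (Nat.card G).factorization p :=
      (hp.dvd_iff_one_le_factorization Nat.card_pos.ne').mp (hx ▸ orderOf_dvd_natCard x)
    have h2 : ¬ 2 ≤ (Nat.card G).factorization p := by
      rwa [← hp.pow_dvd_iff_le_factorization Nat.card_pos.ne']
    omega
  let P : Sylow p G := .ofCard (Subgroup.zpowers x) (by
    rw [Nat.card_zpowers, hx, factorization_eq_one, pow_one])
  let Q : Sylow p G := .ofCard (Subgroup.zpowers y) (by
    rw [Nat.card_zpowers, hy, factorization_eq_one, pow_one])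
  obtain ⟨g, hg⟩ := exists_smul_eq G P Q
  refine ⟨g, ?_⟩
  have : g * x * g⁻¹ ∈ (g • P : Sylow p G) :=
    Subgroup.smul_mem_pointwise_smul x (MulAut.conj g) _ (Subgroup.mem_zpowers x)
  rwa [hg] at this

end Group

theorem not_sq_dvd_factorial {p : ℕ} (hp : p.Prime) : ¬ p ^ 2 ∣ p.factorial := by
  rw [← Nat.mul_factorial_pred hp.ne_zero, pow_two, Nat.mul_dvd_mul_iff_left hp.pos,
    hp.dvd_factorial]
  have := hp.pos
  omega

theorem exists_smul_eq_of_isMultiplyPretransitive {G α : Type*} [Group G] [MulAction G α]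
    {s : Finset α} [IsMultiplyPretransitive G α s.card] (f : s ↪ α) :
    ∃ g : G, ∀ a : s, g • (a : α) = f a := by
  let e : Fin s.card ↪ s := s.equivFin.symm.toEmbedding
  obtain ⟨g, hg⟩ := exists_smul_eq G (e.trans (.subtype _)) (e.trans f)
  refine ⟨g, fun a ↦ ?_⟩
  obtain ⟨i, rfl⟩ := s.equivFin.symm.surjective a
  exact DFunLike.congr_fun hg i

section Jordan

variable {α : Type*} [DecidableEq α]

/-- The subgroup of the permutations of `α` that move only points of `s`, encoded as the image of
`Perm s`. -/
def permsSupportedIn (s : Finset α) : Subgroup (Perm α) :=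
  (ofSubtype : Perm s →* Perm α).range

theorem card_permsSupportedIn (s : Finset α) :
    Nat.card (permsSupportedIn s) = s.card.factorial := by
  rw [permsSupportedIn, ← Nat.card_congr (MonoidHom.ofInjective ofSubtype_injective).toEquiv,
    Nat.card_perm, Nat.card_eq_fintype_card, Fintype.card_coe]

variable [Fintype α] {G : Subgroup (Perm α)} {y : Perm α}

theorem mem_permsSupportedIn {s : Finset α} {g : Perm α} :
    g ∈ permsSupportedIn s ↔ g.support ⊆ s :=
  mem_range_ofSubtype_iff.trans Finset.coe_subset

theorem commute_of_disjoint_of_mem_permsSupportedIn {τ k : Perm α} (hτ : Disjoint τ y)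
    (hk : k ∈ permsSupportedIn y.support) : Commute τ k :=
  (hτ.mono le_rfl (mem_permsSupportedIn.mp hk)).commute

theorem mem_zpowers_of_commute_of_mem_permsSupportedIn {k : Perm α} (hy : y.IsCycle)
    (hk : k ∈ permsSupportedIn y.support) (hky : Commute k y) : k ∈ Subgroup.zpowers y := by
  obtain ⟨hk', h⟩ := hy.commute_iff.mp hky
  rwa [ofSubtype_subtypePerm _ fun a ha ↦ mem_permsSupportedIn.mp hk (mem_support.mpr ha)] at h

theorem exists_mem_conj_mem_zpowers_of_isCycle {z : Perm α} (hy : y.IsCycle)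
    (hp : y.support.card.Prime) (hyG : y ∈ G) (hzG : z ∈ G)
    (hz : z ∈ permsSupportedIn y.support) (hzy : orderOf z = orderOf y) :
    ∃ f ∈ G ⊓ permsSupportedIn y.support, f * z * f⁻¹ ∈ Subgroup.zpowers y := by
  set F := G ⊓ permsSupportedIn y.support
  have card_dvd : Nat.card F ∣ y.support.card.factorial :=
    card_permsSupportedIn y.support ▸ Subgroup.card_dvd_of_le inf_le_right
  have hzF : z ∈ F := ⟨hzG, hz⟩
  have hyF : y ∈ F := ⟨hyG, mem_permsSupportedIn.mpr subset_rfl⟩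
  obtain ⟨f, i, hi⟩ := exists_conj_mem_zpowers_of_orderOf_eq hp
    (fun h ↦ not_sq_dvd_factorial hp (h.trans card_dvd)) (x := ⟨z, hzF⟩) (y := ⟨y, hyF⟩)
    (by rw [Subgroup.orderOf_mk, hzy, hy.orderOf]) (by rw [Subgroup.orderOf_mk, hy.orderOf])
  exact ⟨f, f.2, i, congrArg Subtype.val hi⟩

theorem isMultiplyPretransitive_of_isCycle_mem (hG : IsPreprimitive G α) (hy : y.IsCycle)
    (hp : y.support.card.Prime) (hyG : y ∈ G) :
    IsMultiplyPretransitive G α (y.supportᶜ).card := by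
  have card_compl := Finset.card_compl_add_card y.support
  have two_le := hp.two_le
  have fixing_isPreprimitive : IsPreprimitive (fixingSubgroup G (y.support : Set α)ᶜ)
      (SubMulAction.ofFixingSubgroup G (y.support : Set α)ᶜ) := by
    have := isPretransitive_of_isCycle_mem hy hyG
    apply IsPreprimitive.of_prime_card
    convert! hp
    change Nat.card ↥((y.support : Set α)ᶜ)ᶜ = _
    rw [compl_compl, Nat.card_coe_set_eq, Set.ncard_coe_finset]
  rcases h : (y.supportᶜ).card with _ | n
  · exact is_zero_pretransitive
  have := (hG.isMultiplyPreprimitive (n := n) (s := (y.support : Set α)ᶜ)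
    (by rw [← Finset.coe_compl, Set.ncard_coe_finset, h])
    (by rw [Nat.card_eq_fintype_card]; omega)
    fixing_isPreprimitive).isMultiplyPretransitive
  exact isMultiplyPretransitive_of_le (n := n + 2) (by omega)
    (by rw [Nat.card_eq_fintype_card]; omega)

theorem exists_mul_mem_and_conj_mem_zpowers_of_disjoint {τ : Perm α} (hG : IsPreprimitive G α)
    (hy : y.IsCycle) (hp : y.support.card.Prime) (hyG : y ∈ G) (hτ : Disjoint τ y) :
    ∃ k ∈ permsSupportedIn y.support, τ * k ∈ G ∧ k⁻¹ * y * k ∈ Subgroup.zpowers y := by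
  have := isMultiplyPretransitive_of_isCycle_mem hG hy hp hyG
  obtain ⟨⟨g, hg⟩, hgτ⟩ := exists_smul_eq_of_isMultiplyPretransitive (G := G) (s := y.supportᶜ)
    ((Function.Embedding.subtype _).trans τ.toEmbedding)
  have inv_mul_mem : τ⁻¹ * g ∈ permsSupportedIn y.support := by
    refine mem_permsSupportedIn.mpr fun a ha ↦ ?_
    by_contra hay
    refine mem_support.mp ha ?_
    rw [mul_apply, Perm.inv_eq_iff_eq]
    exact hgτ ⟨a, Finset.mem_compl.mpr hay⟩
  have conj_eq : g⁻¹ * y * g = (τ⁻¹ * g)⁻¹ * y * (τ⁻¹ * g) := by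
    rw [mul_inv_rev, inv_inv, mul_assoc g⁻¹ τ y, hτ.commute.eq]
    group
  have conj_mem : g⁻¹ * y * g ∈ permsSupportedIn y.support := by
    rw [conj_eq]
    exact mul_mem (mul_mem (inv_mem inv_mul_mem) (mem_permsSupportedIn.mpr subset_rfl)) inv_mul_mem
  have orderOf_conj : orderOf (g⁻¹ * y * g) = orderOf y := by
    simpa using orderOf_injective (MulAut.conj g⁻¹).toMonoidHom (MulAut.conj g⁻¹).injective y
  obtain ⟨f, ⟨hfG, hfy⟩, hf⟩ := exists_mem_conj_mem_zpowers_of_isCycle hy hp hyG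
    (mul_mem (mul_mem (inv_mem hg) hyG) hg) conj_mem orderOf_conj
  refine ⟨τ⁻¹ * g * f⁻¹, mul_mem inv_mul_mem (inv_mem hfy), ?_, ?_⟩
  · simpa [mul_assoc] using mul_mem hg (inv_mem hfG)
  · rw [conj_eq] at hf
    convert hf using 1
    group

theorem commutatorElement_mem_of_disjoint {τ₁ τ₂ : Perm α} (hG : IsPreprimitive G α)
    (hy : y.IsCycle) (hp : y.support.card.Prime) (hyG : y ∈ G)
    (h₁ : Disjoint τ₁ y) (h₂ : Disjoint τ₂ y) : ⁅τ₁, τ₂⁆ ∈ G := by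
  obtain ⟨k₁, hk₁, hk₁G, hk₁y⟩ := exists_mul_mem_and_conj_mem_zpowers_of_disjoint hG hy hp hyG h₁
  obtain ⟨k₂, hk₂, hk₂G, hk₂y⟩ := exists_mul_mem_and_conj_mem_zpowers_of_disjoint hG hy hp hyG h₂
  have commutator_mem : ⁅k₁, k₂⁆ ∈ G := by
    refine Subgroup.zpowers_le.mpr hyG (mem_zpowers_of_commute_of_mem_permsSupportedIn hy ?_
      (commute_commutatorElement_of_conj_mem_zpowers hk₁y hk₂y))
    exact mul_mem (mul_mem (mul_mem hk₁ hk₂) (inv_mem hk₁)) (inv_mem hk₂)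
  have commutator_mul : ⁅τ₁ * k₁, τ₂ * k₂⁆ = ⁅τ₁, τ₂⁆ * ⁅k₁, k₂⁆ :=
    commutatorElement_mul_mul_of_commute (commute_of_disjoint_of_mem_permsSupportedIn h₁ hk₁)
      (commute_of_disjoint_of_mem_permsSupportedIn h₁ hk₂)
      (commute_of_disjoint_of_mem_permsSupportedIn h₂ hk₁)
      (commute_of_disjoint_of_mem_permsSupportedIn h₂ hk₂)
  rw [← mul_mem_cancel_right commutator_mem, ← commutator_mul]
  exact mul_mem (mul_mem (mul_mem hk₁G hk₂G) (inv_mem hk₁G)) (inv_mem hk₂G)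

theorem alternatingGroup_le_of_isPreprimitive_of_isCycle_mem (hG : IsPreprimitive G α)
    (hy : y.IsCycle) (hp : y.support.card.Prime) (hcard : y.support.card + 3 ≤ Fintype.card α)
    (hyG : y ∈ G) : alternatingGroup α ≤ G := by
  have card_compl := Finset.card_compl_add_card y.support
  obtain ⟨a, b, c, ha, hb, hc, hab, hac, hbc⟩ :=
    Finset.two_lt_card_iff.mp (show 2 < (y.supportᶜ).card by omega)
  have swap_disjoint {u v : α} (hu : u ∈ y.supportᶜ) (hv : v ∈ y.supportᶜ) :
      Disjoint (swap u v) y := fun x ↦ by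
    by_cases hx : x ∈ y.support
    · exact .inl (swap_apply_of_ne_of_ne (by rintro rfl; simp_all) (by rintro rfl; simp_all))
    · exact .inr (notMem_support.mp hx)
  have commutator_eq : ⁅swap a b, swap a c⁆ = (swap a b * swap a c) ^ 2 := by
    simp only [commutatorElement_def, swap_inv, pow_two, mul_assoc]
  refine alternatingGroup_le_of_isPreprimitive_of_isThreeCycle_mem hG
    (isThreeCycle_swap_mul_swap_same hab hac hbc).isThreeCycle_sq ?_
  rw [← pow_two, ← commutator_eq]
  exact commutatorElement_mem_of_disjoint hG hy hp hyG (swap_disjoint ha hb) (swap_disjoint ha hc)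

end Jordan

section CycleTypes

variable {α : Type*} [Fintype α] [DecidableEq α]

theorem isCycle_of_cycleType_eq_singleton {g : Perm α} {k : ℕ} (hg : g.cycleType = {k}) :
    g.IsCycle :=
  card_cycleType_eq_one.mp (by rw [hg, Multiset.card_singleton])

theorem card_support_of_cycleType_eq_singleton {g : Perm α} {k : ℕ} (hg : g.cycleType = {k}) :
    g.support.card = k := by
  rw [← sum_cycleType, hg, Multiset.sum_singleton]

theorem exists_mem_cycleFactorsFinset_mem_zpowers {x : Perm α} {a b : ℕ}
    (hx : x.cycleType = {a, b}) (hab : a.Coprime b) :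
    ∃ c ∈ x.cycleFactorsFinset, c.support.card = a ∧ c ∈ Subgroup.zpowers x := by
  have a_mem : a ∈ x.cycleType := by simp [hx]
  rw [cycleType_def] at a_mem
  obtain ⟨c, hc, hca : c.support.card = a⟩ := Multiset.mem_map.mp a_mem
  have hc' : c.IsCycle := (mem_cycleFactorsFinset_iff.mp hc).1
  have cycleType_mul_inv : (x * c⁻¹).cycleType = {b} := by
    rw [cycleType_mul_inv_mem_cycleFactorsFinset_eq_sub hc, hx, hc'.cycleType, hca,
      Multiset.insert_eq_cons, ← Multiset.singleton_add, add_tsub_cancel_left]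
  have mul_inv_pow : (x * c⁻¹) ^ b = 1 := by
    rw [← orderOf_dvd_iff_pow_eq_one, ← lcm_cycleType, cycleType_mul_inv, Multiset.lcm_singleton,
      normalize_eq]
  have x_pow : x ^ b = c ^ b := by
    have := (disjoint_mul_inv_of_mem_cycleFactorsFinset hc).commute.mul_pow b
    rwa [inv_mul_cancel_right, mul_inv_pow, one_mul] at this
  obtain ⟨j, hj⟩ := exists_pow_eq_self_of_coprime (x := c) (n := b)
    (by rw [hc'.orderOf, hca]; exact hab.symm)
  refine ⟨c, hc, hca, ?_⟩
  rw [← hj, ← x_pow]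
  exact pow_mem (pow_mem (Subgroup.mem_zpowers x) b) j

theorem isCycle_of_orderOf_eq_prime_pow {σ : Perm α} {p k : ℕ} (hp : p.Prime)
    (hσ : orderOf σ = p ^ (k + 1)) (hcard : σ.support.card < p ^ (k + 1) + 2) : σ.IsCycle := by
  have mem_cycleType : p ^ (k + 1) ∈ σ.cycleType := by
    by_contra h
    have lcm_dvd : σ.cycleType.lcm ∣ p ^ k := Multiset.lcm_dvd.mpr fun n hn ↦ by
      obtain ⟨i, hi, rfl⟩ := (Nat.dvd_prime_pow hp).mp (hσ ▸ dvd_of_mem_cycleType hn)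
      have : i ≠ k + 1 := fun hik ↦ h (hik ▸ hn)
      exact pow_dvd_pow p (by omega)
    rw [lcm_cycleType, hσ, Nat.pow_dvd_pow_iff_le_right hp.one_lt] at lcm_dvd
    omega
  obtain ⟨t, ht⟩ := Multiset.exists_cons_of_mem mem_cycleType
  have t_eq_zero : t = 0 := Multiset.eq_zero_of_forall_notMem fun n hn ↦ by
    have two_le : 2 ≤ n := two_le_of_mem_cycleType (ht ▸ Multiset.mem_cons_of_mem hn)
    have n_le : n ≤ t.sum := Multiset.le_sum_of_mem hn
    rw [← sum_cycleType, ht, Multiset.sum_cons] at hcard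
    omega
  exact isCycle_of_cycleType_eq_singleton (by rw [ht, t_eq_zero, Multiset.cons_zero])

theorem exists_alternatingGroup_cycleType_eq_singleton {k : ℕ} (hk : Odd k) (hk1 : k ≠ 1)
    (hkα : k ≤ Fintype.card α) :
    ∃ x : alternatingGroup α, (x : Perm α).cycleType = {k} := by
  obtain ⟨j, rfl⟩ := hk
  obtain ⟨x, hx⟩ := (exists_with_cycleType_iff α (m := {2 * j + 1})).mpr
    ⟨by simpa using hkα, by simp; omega⟩
  exact ⟨⟨x, by simp [mem_alternatingGroup, sign_of_cycleType, hx, pow_add, pow_mul]⟩, hx⟩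

theorem exists_alternatingGroup_cycleType_eq_pair {a b : ℕ} (ha : 2 ≤ a) (hb : 2 ≤ b)
    (hab : Even (a + b)) (habα : a + b ≤ Fintype.card α) :
    ∃ x : alternatingGroup α, (x : Perm α).cycleType = {a, b} := by
  obtain ⟨x, hx⟩ := (exists_with_cycleType_iff α (m := {a, b})).mpr
    ⟨by simpa using habα, by simp [ha, hb]⟩
  have sign_x : sign x = 1 := by
    rw [sign_of_cycleType, hx]
    simpa using (hab.add even_two).neg_one_pow
  exact ⟨⟨x, mem_alternatingGroup.mpr sign_x⟩, hx⟩

end CycleTypes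

theorem isPretransitive_of_card_le_ncard_orbit {G α : Type*} [Group G] [MulAction G α]
    [Fintype α] {a : α} (h : Fintype.card α ≤ (orbit G a).ncard) : IsPretransitive G α := by
  rw [isPretransitive_iff_orbit_eq_univ a, Set.eq_univ_iff_ncard]
  exact le_antisymm (Set.ncard_le_card _) (Nat.card_eq_fintype_card (α := α) ▸ h)

theorem smul_orbit_of_mem {G α : Type*} [Group G] [MulAction G α] {H : Subgroup G} {g : G}
    (hg : g ∈ H) (a : α) : g • orbit H a = orbit H a :=
  smul_orbit (⟨g, hg⟩ : H) a

theorem smul_eq_of_pow_smul_eq {G α : Type*} [Group G] [MulAction G α] {c : G} {i : ℕ}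
    (hi : i.Coprime (orderOf c)) {a : α} (ha : c ^ i • a = a) : c • a = a := by
  obtain ⟨j, hj⟩ := exists_pow_eq_self_of_coprime hi
  rw [← hj]
  exact pow_mem (S := stabilizer G a) ha j

section InvariantSets

variable {α : Type*} [Fintype α] [DecidableEq α]

theorem cycleType_subtypePerm_le (g : Perm α) {p : α → Prop} [DecidablePred p]
    (hp : ∀ a, p (g a) ↔ p a) : (g.subtypePerm hp).cycleType ≤ g.cycleType := by
  have hnp (a : α) : ¬ p (g a) ↔ ¬ p a := not_congr (hp a)
  let u : Perm α := ofSubtype (g.subtypePerm hp)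
  let v : Perm α := ofSubtype (g.subtypePerm (p := fun a ↦ ¬ p a) hnp)
  have u_apply_of_not {a : α} (ha : ¬ p a) : u a = a := ofSubtype_apply_of_not_mem _ ha
  have v_apply_of_pos {a : α} (ha : p a) : v a = a :=
    ofSubtype_apply_of_not_mem (p := fun a ↦ ¬ p a) _ (not_not.mpr ha)
  have g_eq_mul : g = u * v := by
    ext a
    by_cases ha : p a
    · exact (congrArg u (v_apply_of_pos ha)).trans (ofSubtype_apply_of_mem _ ha) |>.symm
    · rw [mul_apply, show v a = g a from ofSubtype_apply_of_mem (p := fun a ↦ ¬ p a) _ ha,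
        u_apply_of_not ((hnp a).mpr ha)]
  have disjoint : Disjoint u v := fun a ↦ (em (p a)).symm.imp u_apply_of_not v_apply_of_pos
  calc (g.subtypePerm hp).cycleType = u.cycleType := cycleType_ofSubtype.symm
    _ ≤ u.cycleType + v.cycleType := Multiset.le_add_right _ _
    _ = g.cycleType := by rw [g_eq_mul, disjoint.cycleType_mul]

theorem exists_le_cycleType_sum_eq_ncard {g : Perm α} (hg : g.cycleType.sum = Fintype.card α)
    {T : Set α} (hT : g • T = T) : ∃ m ≤ g.cycleType, m.sum = T.ncard := by
  classical
  have mem_iff (a : α) : g a ∈ T ↔ a ∈ T := by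
    conv_lhs => rw [← hT]
    exact Set.smul_mem_smul_set_iff
  have moves (a : α) : g a ≠ a := by
    rw [sum_cycleType, Finset.card_eq_iff_eq_univ] at hg
    exact mem_support.mp (hg ▸ Finset.mem_univ a)
  refine ⟨_, cycleType_subtypePerm_le g mem_iff, ?_⟩
  have support_eq_univ : (g.subtypePerm mem_iff).support = Finset.univ :=
    Finset.eq_univ_of_forall fun a ↦ mem_support.mpr (Subtype.coe_ne_coe.mp (moves a))
  rw [sum_cycleType, support_eq_univ, Finset.card_univ, ← Nat.card_eq_fintype_card,
    Nat.card_coe_set_eq]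

theorem ncard_mem_of_cycleType_eq_pair {g : Perm α} {a b : ℕ} (hg : g.cycleType = {a, b})
    (hab : a + b = Fintype.card α) {T : Set α} (hT : g • T = T) :
    T.ncard ∈ ({0, a, b, a + b} : Set ℕ) := by
  obtain ⟨m, hm, hmT⟩ := exists_le_cycleType_sum_eq_ncard (by rw [hg]; simpa using hab) hT
  have mem_powerset : m ∈ (a ::ₘ b ::ₘ 0).powerset :=
    Multiset.mem_powerset.mpr (hg ▸ hm : m ≤ {a, b})
  simp only [Multiset.powerset_cons, Multiset.powerset_zero, Multiset.map_singleton,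
    Multiset.mem_add, Multiset.mem_map, Multiset.mem_singleton] at mem_powerset
  rw [← hmT]
  rcases mem_powerset with (rfl | rfl) | ⟨_, rfl | rfl, rfl⟩ <;> simp

theorem support_subset_of_isCycle_of_smul_eq {c : Perm α} (hc : c.IsCycle) {T : Set α}
    (hT : c • T = T) {s : α} (hs : s ∈ c.support) (hsT : s ∈ T) : (c.support : Set α) ⊆ T := by
  intro t ht
  obtain ⟨i, rfl⟩ := hc.sameCycle (mem_support.mp hs) (mem_support.mp ht)
  rw [← show c ^ i • T = T from zpow_mem (K := stabilizer (Perm α) T) hT i]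
  exact Set.smul_mem_smul_set hsT

end InvariantSets

section Blocks

variable {α : Type*} [Fintype α] [DecidableEq α] {H : Subgroup (Perm α)}

theorem card_support_le_ncard_orbit {c : Perm α} (hc : c.IsCycle) (hcH : c ∈ H) {s : α}
    (hs : s ∈ c.support) : c.support.card ≤ (orbit H s).ncard := by
  rw [← Set.ncard_coe_finset]
  exact Set.ncard_le_ncard
    (support_subset_of_isCycle_of_smul_eq hc (smul_orbit_of_mem hcH s) hs (mem_orbit_self s))

theorem isPretransitive_of_cycleType_eq_singleton {x : Perm α}
    (hx : x.cycleType = {Fintype.card α}) (hxH : x ∈ H) : IsPretransitive H α := by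
  have hx' := isCycle_of_cycleType_eq_singleton hx
  obtain ⟨s, hs⟩ := hx'.nonempty_support
  refine isPretransitive_of_card_le_ncard_orbit (a := s) ?_
  calc Fintype.card α = x.support.card := (card_support_of_cycleType_eq_singleton hx).symm
    _ ≤ (orbit H s).ncard := card_support_le_ncard_orbit hx' hxH hs

theorem support_subset_of_isBlock {B : Set α} (hB : IsBlock H B) {c : Perm α} (hc : c.IsCycle)
    (hp : c.support.card.Prime) (hcH : c ∈ H) {s : α} (hs : s ∈ c.support) (hsB : s ∈ B)
    (hB' : B.Nontrivial) : (c.support : Set α) ⊆ B := by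
  have smul_eq {g : Perm α} (hg : g ∈ H) {b : α} (hb : b ∈ B) (hgb : g b ∈ B) : g • B = B :=
    isBlock_iff_smul_eq_of_mem.mp hB (g := ⟨g, hg⟩) hb hgb
  obtain ⟨b, hb, hbs⟩ := hB'.exists_ne s
  refine support_subset_of_isCycle_of_smul_eq hc ?_ hs hsB
  by_cases hcb : c b = b
  · exact smul_eq hcH hb (by rwa [hcb])
  · obtain ⟨i, rfl⟩ := hc.exists_pow_eq (mem_support.mp hs) hcb
    have hi : i.Coprime (orderOf c) := by
      rw [Nat.coprime_comm, hc.orderOf, hp.coprime_iff_not_dvd, ← hc.orderOf,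
        orderOf_dvd_iff_pow_eq_one]
      exact fun h ↦ hbs (by rw [h, one_apply])
    exact smul_eq_of_pow_smul_eq hi (smul_eq (pow_mem hcH i) hsB hb)

theorem isPreprimitive_of_isCycle_mem [IsPretransitive H α] {c : Perm α} (hc : c.IsCycle)
    (hp : c.support.card.Prime) (hcH : c ∈ H)
    (hB : ∀ B : Set α, IsBlock H B → (c.support : Set α) ⊆ B → c.support.card ≤ B.ncard →
      B.ncard ∣ Fintype.card α → B.ncard = Fintype.card α) :
    IsPreprimitive H α := by
  obtain ⟨s, hs⟩ := hc.nonempty_support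
  refine IsPreprimitive.of_isTrivialBlock_base s fun {B} hsB hBH ↦ ?_
  refine B.subsingleton_or_nontrivial.imp_right fun hB' ↦ ?_
  have support_subset := support_subset_of_isBlock hBH hc hp hcH hs hsB hB'
  have support_le : c.support.card ≤ B.ncard := by
    rw [← Set.ncard_coe_finset]
    exact Set.ncard_le_ncard support_subset
  have dvd_card := hBH.ncard_dvd_card ⟨s, hsB⟩
  rw [Nat.card_eq_fintype_card] at dvd_card
  rw [Set.eq_univ_iff_ncard, Nat.card_eq_fintype_card]
  exact hB B hBH support_subset support_le dvd_card

theorem smul_eq_of_isBlock_of_mem_cycleFactorsFinset {B : Set α} (hB : IsBlock H B) {c x : Perm α}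
    (hc : c ∈ x.cycleFactorsFinset) (hxH : x ∈ H) (hcB : (c.support : Set α) ⊆ B) : x • B = B := by
  obtain ⟨c_isCycle, hxc⟩ := mem_cycleFactorsFinset_iff.mp hc
  obtain ⟨s, hs⟩ := c_isCycle.nonempty_support
  refine isBlock_iff_smul_eq_of_mem.mp hB (g := ⟨x, hxH⟩) (hcB hs) (hcB ?_)
  rwa [Subgroup.mk_smul, Perm.smul_def, ← hxc s hs, Finset.mem_coe, apply_mem_support]

theorem isPreprimitive_of_cycleType_eq_pair [IsPretransitive H α] {x : Perm α} {a b : ℕ}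
    (hx : x.cycleType = {a, b}) (ha : a.Prime) (hab : a.Coprime b) (hα : a + b = Fintype.card α)
    (hxH : x ∈ H) : IsPreprimitive H α := by
  obtain ⟨c, hc, rfl, hcx⟩ := exists_mem_cycleFactorsFinset_mem_zpowers hx hab
  have c_isCycle := (mem_cycleFactorsFinset_iff.mp hc).1
  have hcH : c ∈ H := Subgroup.zpowers_le.mpr hxH hcx
  refine isPreprimitive_of_isCycle_mem c_isCycle ha hcH fun B hB hcB support_le dvd_card ↦ ?_
  have two_le_b : 2 ≤ b := two_le_of_mem_cycleType (σ := x) (by simp [hx])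
  rw [← hα] at dvd_card ⊢
  rcases ncard_mem_of_cycleType_eq_pair hx hα
    (smul_eq_of_isBlock_of_mem_cycleFactorsFinset hB hc hxH hcB) with h | h | h | h
  · have := ha.pos
    omega
  · rw [h, Nat.dvd_add_self_left] at dvd_card
    exact absurd (hab.eq_one_of_dvd dvd_card) ha.ne_one
  · rw [h, Nat.dvd_add_self_right] at dvd_card
    have := hab.symm.eq_one_of_dvd dvd_card
    omega
  · exact h

end Blocks

theorem map_eq_one_of_sq_ne_one {G : Type*} [Group G] [IsSimpleGroup G] (f : G →* ℤˣ) {x : G}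
    (hx : x ^ 2 ≠ 1) : f x = 1 := by
  have sq_mem_ker : x ^ 2 ∈ f.ker := by
    rw [MonoidHom.mem_ker, map_pow, Int.units_sq]
  rcases f.normal_ker.eq_bot_or_eq_top with h | h
  · exact absurd (Subgroup.mem_bot.mp (h ▸ sq_mem_ker)) hx
  · exact MonoidHom.mem_ker.mp (h ▸ Subgroup.mem_top x)

theorem eq_top_of_index_le_six_of_orderOf_eq_four {G : Type*} [Group G] [IsSimpleGroup G]
    {K : Subgroup G} [K.FiniteIndex] (hK : K.index ≤ 6) {x : G} (hxK : x ∈ K)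
    (hx : orderOf x = 4) : K = ⊤ := by
  classical
  have := Fintype.ofFinite (G ⧸ K)
  let φ : G →* Perm (G ⧸ K) := toPermHom G (G ⧸ K)
  have ker_φ : K.normalCore = φ.ker := K.normalCore_eq_ker
  rcases φ.normal_ker.eq_bot_or_eq_top with ker_eq_bot | ker_eq_top
  · have orderOf_φx : orderOf (φ x) = 2 ^ (1 + 1) :=
      (orderOf_injective φ (φ.ker_eq_bot_iff.mp ker_eq_bot) x).trans hx
    have φx_fixes : φ x ((1 : G) : G ⧸ K) = ((1 : G) : G ⧸ K) := by
      change ((x * 1 : G) : G ⧸ K) = _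
      rw [QuotientGroup.eq]
      simpa using hxK
    have card_support_lt : (φ x).support.card < 2 ^ (1 + 1) + 2 := by
      have : (φ x).support.card < Fintype.card (G ⧸ K) :=
        Finset.card_lt_univ_of_notMem (notMem_support.mpr φx_fixes)
      rw [← Nat.card_eq_fintype_card] at this
      exact this.trans_le hK
    have φx_isCycle := isCycle_of_orderOf_eq_prime_pow Nat.prime_two orderOf_φx card_support_lt
    have sign_φx : sign (φ x) = -1 := by
      rw [φx_isCycle.sign, ← φx_isCycle.orderOf, orderOf_φx]
      rfl
    have sq_ne_one : x ^ 2 ≠ 1 := pow_ne_one_of_lt_orderOf two_ne_zero (by omega)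
    have := sign_φx.symm.trans (map_eq_one_of_sq_ne_one (sign.comp φ) sq_ne_one)
    exact absurd this (by decide)
  · exact top_le_iff.mp (ker_eq_top ▸ ker_φ ▸ K.normalCore_le)

theorem exists_odd_prime_le_add_three_le_two_mul {m : ℕ} (hm : 3 ≤ m) :
    ∃ p, p.Prime ∧ Odd p ∧ m ≤ p ∧ p + 3 ≤ 2 * m := by
  obtain ⟨p, hp, hlt, hle⟩ := Nat.exists_prime_lt_and_le_two_mul (m - 1) (by omega)
  obtain ⟨k, hk⟩ : Odd p := hp.odd_of_ne_two (by omega)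
  exact ⟨p, hp, ⟨k, hk⟩, by omega, by omega⟩

section InvariableGeneration

/-- Two elements generate `G` invariably if all their conjugates `g⁻¹ * x * g` and `h⁻¹ * y * h`
together generate `G`. -/
def GenerateInvariably {G : Type*} [Group G] (x y : G) : Prop :=
  ∀ g h : G, Subgroup.closure {g⁻¹ * x * g, h⁻¹ * y * h} = ⊤

variable {α : Type*} [Fintype α] [DecidableEq α]

variable (α) in
/-- The cycle types `m₁` and `m₂` force the alternating group if every group of permutations of `α`
containing elements of both types contains `alternatingGroup α`. -/
def ForceAlternatingGroup (m₁ m₂ : Multiset ℕ) : Prop :=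
  ∀ (H : Subgroup (Perm α)) (x y : Perm α), x ∈ H → y ∈ H → x.cycleType = m₁ → y.cycleType = m₂ →
    alternatingGroup α ≤ H

theorem ForceAlternatingGroup.generateInvariably {x y : alternatingGroup α}
    (h : ForceAlternatingGroup α (x : Perm α).cycleType (y : Perm α).cycleType) :
    GenerateInvariably x y := by
  intro g k
  set C := Subgroup.closure {g⁻¹ * x * g, k⁻¹ * y * k}
  have cycleType_conj_eq (z l : alternatingGroup α) :
      ((l⁻¹ * z * l : alternatingGroup α) : Perm α).cycleType = (z : Perm α).cycleType := by
    simpa using cycleType_conj (σ := (z : Perm α)) (τ := (l : Perm α)⁻¹)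
  have le_map : alternatingGroup α ≤ C.map (alternatingGroup α).subtype :=
    h _ _ _ (Subgroup.mem_map_of_mem _ (Subgroup.subset_closure (Set.mem_insert _ _)))
      (Subgroup.mem_map_of_mem _ (Subgroup.subset_closure (Set.mem_insert_of_mem _ rfl)))
      (cycleType_conj_eq x g) (cycleType_conj_eq y k)
  refine eq_top_iff.mpr fun z _ ↦ ?_
  obtain ⟨w, hw, hwz⟩ := le_map z.2
  rwa [Subtype.ext hwz] at hw

theorem ForceAlternatingGroup.exists_generateInvariably {m₁ m₂ : Multiset ℕ}
    (h : ForceAlternatingGroup α m₁ m₂)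
    (hm₁ : ∃ x : alternatingGroup α, (x : Perm α).cycleType = m₁)
    (hm₂ : ∃ y : alternatingGroup α, (y : Perm α).cycleType = m₂) (hp : m₂.lcm.Prime) :
    ∃ x y : alternatingGroup α, (orderOf y).Prime ∧ GenerateInvariably x y := by
  obtain ⟨x, rfl⟩ := hm₁
  obtain ⟨y, rfl⟩ := hm₂
  exact ⟨x, y, by rwa [← Subgroup.orderOf_coe, ← lcm_cycleType], h.generateInvariably⟩

theorem alternatingGroup_le_of_cycleType_eq_singleton {H : Subgroup (Perm α)} [IsPretransitive H α]
    {y : Perm α} {p : ℕ} (hy : y.cycleType = {p}) (hp : p.Prime) (hcard : p + 3 ≤ Fintype.card α)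
    (hdvd : ∀ d, p ≤ d → d ∣ Fintype.card α → d = Fintype.card α) (hyH : y ∈ H) :
    alternatingGroup α ≤ H := by
  have y_isCycle := isCycle_of_cycleType_eq_singleton hy
  obtain rfl := card_support_of_cycleType_eq_singleton hy
  exact alternatingGroup_le_of_isPreprimitive_of_isCycle_mem
    (isPreprimitive_of_isCycle_mem y_isCycle hp hyH fun B _ _ ↦ hdvd B.ncard) y_isCycle hp hcard hyH

theorem forceAlternatingGroup_of_card_prime (hα : (Fintype.card α).Prime) :
    ForceAlternatingGroup α {3} {Fintype.card α} := by
  intro H x y hxH hyH hx hy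
  have := isPretransitive_of_cycleType_eq_singleton hy hyH
  exact alternatingGroup_le_of_isPreprimitive_of_isThreeCycle_mem
    (IsPreprimitive.of_prime_card (by rwa [Nat.card_eq_fintype_card])) hx hxH

theorem forceAlternatingGroup_of_card_odd {p : ℕ} (hα : Odd (Fintype.card α)) (hp : p.Prime)
    (hp₁ : Fintype.card α < 3 * p) (hp₂ : p + 3 ≤ Fintype.card α) :
    ForceAlternatingGroup α {Fintype.card α} {p} := by
  intro H x y hxH hyH hx hy
  have := isPretransitive_of_cycleType_eq_singleton hx hxH
  refine alternatingGroup_le_of_cycleType_eq_singleton hy hp hp₂ (fun d hpd ⟨k, hk⟩ ↦ ?_) hyH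
  have k_lt : k < 3 := by nlinarith
  have k_odd : Odd k := (Nat.odd_mul.mp (hk ▸ hα)).2
  obtain rfl : k = 1 := by interval_cases k <;> simp_all [Nat.odd_iff]
  omega

theorem forceAlternatingGroup_of_card_eq_two_mul {m p : ℕ} (hα : Fintype.card α = 2 * m)
    (hp : p.Prime) (hmp : m < p) (hpm : p + 3 ≤ 2 * m) :
    ForceAlternatingGroup α {m, m} {p} := by
  intro H x y hxH hyH hx hy
  have y_isCycle := isCycle_of_cycleType_eq_singleton hy
  obtain rfl := card_support_of_cycleType_eq_singleton hy
  obtain ⟨s, hs⟩ := y_isCycle.nonempty_support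
  have le_orbit : y.support.card ≤ (orbit H s).ncard := card_support_le_ncard_orbit y_isCycle hyH hs
  have orbit_mem : (orbit H s).ncard ∈ ({0, m, m, m + m} : Set ℕ) :=
    ncard_mem_of_cycleType_eq_pair hx (by omega) (smul_orbit_of_mem hxH s)
  have : IsPretransitive H α := isPretransitive_of_card_le_ncard_orbit (a := s) (by
    simp only [Set.mem_insert_iff, Set.mem_singleton_iff] at orbit_mem
    omega)
  refine alternatingGroup_le_of_cycleType_eq_singleton hy hp (by omega) (fun d hpd ⟨k, hk⟩ ↦ ?_) hyH
  obtain rfl : k = 1 := by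
    have k_lt : k < 2 := by nlinarith
    have k_ne : k ≠ 0 := by rintro rfl; omega
    omega
  omega

theorem forceAlternatingGroup_of_card_eq_two_mul_prime {p : ℕ} (hα : Fintype.card α = 2 * p)
    (hp : p.Prime) (hp5 : 5 ≤ p) : ForceAlternatingGroup α {3, 2 * p - 3} {p, p} := by
  intro H x y hxH hyH hx hy
  have coprime : Nat.Coprime 3 (2 * p - 3) :=
    (Nat.coprime_sub_self_right (by omega)).mpr <|
      Nat.Coprime.mul_right (by norm_num) ((Nat.coprime_primes Nat.prime_three hp).mpr (by omega))
  obtain ⟨c, -, hc, hcx⟩ := exists_mem_cycleFactorsFinset_mem_zpowers hx coprime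
  have : IsPretransitive H α := by
    obtain ⟨s⟩ : Nonempty α := Fintype.card_pos_iff.mp (by omega)
    have orbit_mem_x := ncard_mem_of_cycleType_eq_pair hx (by omega) (smul_orbit_of_mem hxH s)
    have orbit_mem_y := ncard_mem_of_cycleType_eq_pair hy (by omega) (smul_orbit_of_mem hyH s)
    have orbit_ne_zero : (orbit H s).ncard ≠ 0 := Set.ncard_ne_zero_of_mem (mem_orbit_self s)
    refine isPretransitive_of_card_le_ncard_orbit (a := s) ?_
    simp only [Set.mem_insert_iff, Set.mem_singleton_iff] at orbit_mem_x orbit_mem_y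
    omega
  exact alternatingGroup_le_of_isPreprimitive_of_isThreeCycle_mem
    (isPreprimitive_of_cycleType_eq_pair hx Nat.prime_three coprime (by omega) hxH)
    (card_support_eq_three_iff.mp hc) (Subgroup.zpowers_le.mpr hxH hcx)

theorem sixty_dvd_card_of_card_eq_six {H : Subgroup (Perm α)} {x y : Perm α}
    (hα : Fintype.card α = 6) (hx : x.cycleType = {4, 2}) (hy : y.cycleType = {5}) (hxH : x ∈ H)
    (hyH : y ∈ H) : 60 ∣ Nat.card H := by
  have y_isCycle := isCycle_of_cycleType_eq_singleton hy
  obtain ⟨s, hs⟩ := y_isCycle.nonempty_support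
  have orbit_mem := ncard_mem_of_cycleType_eq_pair hx (by omega) (smul_orbit_of_mem hxH s)
  have le_orbit := card_support_le_ncard_orbit y_isCycle hyH hs
  rw [card_support_of_cycleType_eq_singleton hy] at le_orbit
  have : IsPretransitive H α := isPretransitive_of_card_le_ncard_orbit (a := s) (by
    simp only [Set.mem_insert_iff, Set.mem_singleton_iff] at orbit_mem
    omega)
  have six_dvd : 6 ∣ Nat.card H := by
    rw [← hα, ← Nat.card_eq_fintype_card, ← index_stabilizer_of_transitive H s]
    exact Subgroup.index_dvd_card _
  have four_dvd : 4 ∣ Nat.card H := by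
    have orderOf_x : orderOf x = 4 := by rw [← lcm_cycleType, hx]; rfl
    exact orderOf_x ▸ Subgroup.orderOf_dvd_natCard H hxH
  have five_dvd : 5 ∣ Nat.card H := by
    have orderOf_y : orderOf y = 5 := by rw [← lcm_cycleType, hy]; rfl
    exact orderOf_y ▸ Subgroup.orderOf_dvd_natCard H hyH
  omega

theorem forceAlternatingGroup_of_card_eq_six (hα : Fintype.card α = 6) :
    ForceAlternatingGroup α {4, 2} {5} := by
  intro H x y hxH hyH hx hy
  have hxA : x ∈ alternatingGroup α := by
    rw [mem_alternatingGroup, sign_of_cycleType, hx]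
    rfl
  have hyA : y ∈ alternatingGroup α := by
    rw [mem_alternatingGroup, sign_of_cycleType, hy]
    rfl
  have orderOf_x : orderOf (⟨x, hxA⟩ : alternatingGroup α) = 4 := by
    rw [Subgroup.orderOf_mk, ← lcm_cycleType, hx]
    rfl
  have : Nontrivial α := Fintype.one_lt_card_iff_nontrivial.mp (by omega)
  have := alternatingGroup.isSimpleGroup (α := α) (by rw [Nat.card_eq_fintype_card]; omega)
  have card_alternatingGroup : Nat.card (alternatingGroup α) = 360 := by
    rw [nat_card_alternatingGroup, Nat.card_eq_fintype_card, hα]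
    rfl
  have sixty_dvd : 60 ∣ Nat.card (H.subgroupOf (alternatingGroup α)) := by
    rw [← Subgroup.card_map_of_injective (alternatingGroup α).subtype_injective,
      Subgroup.subgroupOf_map_subtype]
    exact sixty_dvd_card_of_card_eq_six hα hx hy ⟨hxH, hxA⟩ ⟨hyH, hyA⟩
  have index_le : (H.subgroupOf (alternatingGroup α)).index ≤ 6 := by
    have := Subgroup.card_mul_index (H.subgroupOf (alternatingGroup α))
    have := Nat.le_of_dvd Nat.card_pos sixty_dvd
    nlinarith
  exact Subgroup.subgroupOf_eq_top.mp
    (eq_top_of_index_le_six_of_orderOf_eq_four index_le (x := ⟨x, hxA⟩) hxH orderOf_x)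

theorem exists_generateInvariably_of_card_prime (hα : (Fintype.card α).Prime)
    (hα3 : 3 ≤ Fintype.card α) :
    ∃ x y : alternatingGroup α, (orderOf y).Prime ∧ GenerateInvariably x y :=
  (forceAlternatingGroup_of_card_prime hα).exists_generateInvariably
    (exists_alternatingGroup_cycleType_eq_singleton (by decide) (by decide) (by omega))
    (exists_alternatingGroup_cycleType_eq_singleton (hα.odd_of_ne_two (by omega)) hα.ne_one le_rfl)
    (by simpa)

theorem exists_generateInvariably_of_card_eq_two_mul {m : ℕ} (hα : Fintype.card α = 2 * m)
    (hm : 3 ≤ m) : ∃ x y : alternatingGroup α, (orderOf y).Prime ∧ GenerateInvariably x y := by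
  obtain ⟨p, hp, p_odd, hmp, hpm⟩ := exists_odd_prime_le_add_three_le_two_mul hm
  rcases hmp.lt_or_eq with hmp | rfl
  · exact (forceAlternatingGroup_of_card_eq_two_mul hα hp hmp hpm).exists_generateInvariably
      (exists_alternatingGroup_cycleType_eq_pair (by omega) (by omega) ⟨m, rfl⟩ (by omega))
      (exists_alternatingGroup_cycleType_eq_singleton p_odd hp.ne_one (by omega)) (by simpa)
  rcases hm.lt_or_eq with hm | rfl
  · have hm5 : 5 ≤ m := by
      obtain ⟨k, rfl⟩ := p_odd
      omega
    exact (forceAlternatingGroup_of_card_eq_two_mul_prime hα hp hm5).exists_generateInvariably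
      (exists_alternatingGroup_cycleType_eq_pair (by decide) (by omega) ⟨m, by omega⟩ (by omega))
      (exists_alternatingGroup_cycleType_eq_pair hp.two_le hp.two_le ⟨m, rfl⟩ (by omega))
      (by simpa)
  · exact (forceAlternatingGroup_of_card_eq_six hα).exists_generateInvariably
      (exists_alternatingGroup_cycleType_eq_pair (by decide) (by decide) (by decide) (by omega))
      (exists_alternatingGroup_cycleType_eq_singleton (by decide) (by decide) (by omega))
      (by simpa using Nat.prime_five)

theorem exists_generateInvariably_of_card_eq_two_mul_add_one {m : ℕ}
    (hα : Fintype.card α = 2 * m + 1) (hm : 3 ≤ m) :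
    ∃ x y : alternatingGroup α, (orderOf y).Prime ∧ GenerateInvariably x y := by
  obtain ⟨p, hp, p_odd, hmp, hpm⟩ := exists_odd_prime_le_add_three_le_two_mul hm
  have forces := forceAlternatingGroup_of_card_odd ⟨m, hα⟩ hp (by omega) (by omega)
  exact forces.exists_generateInvariably
    (exists_alternatingGroup_cycleType_eq_singleton ⟨m, hα⟩ (by omega) le_rfl)
    (exists_alternatingGroup_cycleType_eq_singleton p_odd hp.ne_one (by omega)) (by simpa)

end InvariableGeneration

theorem alternating_invariably_generated_two_elements_general {α : Type*} [Fintype α]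
    [DecidableEq α] (hα : 5 ≤ Fintype.card α) :
    ∃ x y : alternatingGroup α, (orderOf y).Prime ∧
      ∀ g h : alternatingGroup α, Subgroup.closure {g⁻¹ * x * g, h⁻¹ * y * h} = ⊤ := by
  obtain ⟨m, hm | hm⟩ := Nat.even_or_odd' (Fintype.card α)
  · exact exists_generateInvariably_of_card_eq_two_mul hm (by omega)
  · rcases (show 2 ≤ m by omega).lt_or_eq with hm2 | rfl
    · exact exists_generateInvariably_of_card_eq_two_mul_add_one hm hm2
    · exact exists_generateInvariably_of_card_prime (hm ▸ Nat.prime_five) (by omega)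

/-- For each integer `n ≥ 5`, the alternating group `A_n` is generated invariably by
two elements, at least one of which has prime order. -/
theorem alternating_invariably_generated_two_elements
    (n : ℕ) (hn : 5 ≤ n) :
    ∃ x y : alternatingGroup (Fin n), (orderOf y).Prime ∧
      ∀ g h : alternatingGroup (Fin n),
        Subgroup.closure {g⁻¹ * x * g, h⁻¹ * y * h} = ⊤ :=
  alternating_invariably_generated_two_elements_general (by rwa [Fintype.card_fin])
end

section
/- Let x, y ∈ A_6 with x of cycle type {5} (a 5-cycle) and y of cycle type {4, 2}. Then for all g, h ∈ A_6, the subgroup of A_6 generated by g⁻¹xg and h⁻¹yh is all of A_6. -/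
/-!
`A₆` is already generated by any element `x` of order 5 together with any element `y` of order 4,
and orders are invariant under conjugation. Let `H` be a subgroup containing both. An even
permutation of order 4 moves at least 6 points, so `y` moves the point fixed by the 5-cycle `x`;
hence `H` is transitive, its order is divisible by 4, 5 and 6, and its index is at most 6.
If `H` were proper, then `A₆`, being simple, would act faithfully and by even permutations on the
at most 6 cosets of `H`. In this action `y` is again an even permutation of order 4, so it
moves every coset, whereas `y ∈ H` fixes the coset `H`.
-/

open Equiv.Perm MulAction

section CycleType

variable {α : Type*} [Fintype α] [DecidableEq α] {σ : Equiv.Perm α}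

theorem prime_pow_mem_cycleType_of_orderOf_eq {p k : ℕ} (hp : p.Prime)
    (hσ : orderOf σ = p ^ (k + 1)) : p ^ (k + 1) ∈ σ.cycleType := by
  by_contra hmem
  have dvd_pow : ∀ n ∈ σ.cycleType, n ∣ p ^ k := by
    intro n hn
    obtain ⟨i, hi, rfl⟩ := (Nat.dvd_prime_pow hp).1 (hσ ▸ dvd_of_mem_cycleType hn)
    have hne : i ≠ k + 1 := fun h => hmem (h ▸ hn)
    exact pow_dvd_pow p (by lia)
  have order_dvd : p ^ (k + 1) ∣ p ^ k := by
    rw [← hσ, ← lcm_cycleType]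
    exact Multiset.lcm_dvd.2 dvd_pow
  exact Nat.not_succ_le_self k ((Nat.pow_dvd_pow_iff_le_right hp.one_lt).1 order_dvd)

/-- A single `2 ^ (k + 1)`-cycle is odd, so a second nontrivial cycle is needed. -/
theorem two_pow_add_two_le_card_support_of_sign_eq_one {k : ℕ}
    (hσ : orderOf σ = 2 ^ (k + 1)) (hsign : sign σ = 1) :
    2 ^ (k + 1) + 2 ≤ σ.support.card := by
  obtain ⟨m, hm⟩ := Multiset.exists_cons_of_mem
    (prime_pow_mem_cycleType_of_orderOf_eq Nat.prime_two hσ)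
  obtain ⟨n, hn⟩ : ∃ n, n ∈ m := by
    refine Multiset.exists_mem_of_ne_zero fun hm0 => ?_
    rw [sign_of_cycleType, hm, hm0] at hsign
    simp [pow_succ, pow_mul] at hsign
  have two_le : 2 ≤ n := two_le_of_mem_cycleType (hm ▸ Multiset.mem_cons_of_mem hn)
  rw [← sum_cycleType, hm, Multiset.sum_cons]
  gcongr
  exact two_le.trans (Multiset.single_le_sum (fun _ _ => Nat.zero_le _) n hn)

theorem exists_isCycleOn_compl_singleton (hσ : σ.IsCycle)
    (hcard : σ.support.card + 1 = Nat.card α) : ∃ a, σ.IsCycleOn {a}ᶜ := by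
  have hcompl : σ.supportᶜ.card = 1 := by
    rw [Finset.card_compl, ← Nat.card_eq_fintype_card, ← hcard, Nat.add_sub_cancel_left]
  obtain ⟨a, ha⟩ := Finset.card_eq_one.1 hcompl
  have hset : {b | σ b ≠ b} = ({a} : Set α)ᶜ := by
    rw [← coe_support_eq_set_support, ← Finset.coe_singleton, ← ha, Finset.coe_compl, compl_compl]
  exact ⟨a, hset ▸ hσ.isCycleOn⟩

end CycleType

theorem isPretransitive_of_isCycleOn_compl_singleton {G α : Type*} [Group G] [MulAction G α]
    {a : α} {x y : G} (hx : (toPerm x : Equiv.Perm α).IsCycleOn {a}ᶜ) (hy : y • a ≠ a) :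
    IsPretransitive G α := by
  refine (isPretransitive_iff_base a).2 fun b => ?_
  by_cases hb : b = a
  · exact ⟨1, by rw [one_smul, hb]⟩
  · obtain ⟨i, hi⟩ := hx.2 hy hb
    refine ⟨x ^ i * y, ?_⟩
    rwa [mul_smul, ← toPerm_apply, ← toPermHom_apply, map_zpow]

section SimpleGroup

variable {G : Type*} [Group G] [IsSimpleGroup G]

theorem injective_or_eq_one_of_isSimpleGroup {N : Type*} [Group N] (f : G →* N) :
    Function.Injective f ∨ f = 1 :=
  f.normal_ker.eq_bot_or_eq_top.imp f.ker_eq_bot_iff.1 MonoidHom.ker_eq_top_iff.1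

theorem sign_toPerm_eq_one_of_sq_ne_one {α : Type*} [Fintype α] [DecidableEq α] [MulAction G α]
    {y : G} (hy : y ^ 2 ≠ 1) : sign (toPerm y : Equiv.Perm α) = 1 := by
  let signHom : G →* ℤˣ := sign.comp (toPermHom G α)
  rcases injective_or_eq_one_of_isSimpleGroup signHom with hinj | hone
  · refine absurd (hinj ?_) hy
    rw [map_pow, Int.units_sq, map_one]
  · exact DFunLike.congr_fun hone y

theorem toPermHom_quotient_injective {H : Subgroup G} (hH : H ≠ ⊤) :
    Function.Injective (toPermHom G (G ⧸ H)) := by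
  rw [← MonoidHom.ker_eq_bot_iff, ← Subgroup.normalCore_eq_ker]
  exact H.normalCore_normal.eq_bot_or_eq_top.resolve_right
    fun h => hH (top_le_iff.1 (h ▸ H.normalCore_le))

theorem two_pow_add_two_lt_index_of_mem {H : Subgroup G} [H.FiniteIndex] (hH : H ≠ ⊤) {y : G}
    (hyH : y ∈ H) {k : ℕ} (hk : 1 ≤ k) (hy : orderOf y = 2 ^ (k + 1)) :
    2 ^ (k + 1) + 2 < H.index := by
  classical
  have := H.fintypeQuotientOfFiniteIndex
  let σ : Equiv.Perm (G ⧸ H) := toPerm y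
  have order_eq : orderOf σ = 2 ^ (k + 1) :=
    (orderOf_injective _ (toPermHom_quotient_injective hH) y).trans hy
  have sq_ne_one : y ^ 2 ≠ 1 := by
    rw [Ne, ← orderOf_dvd_iff_pow_eq_one, hy]
    exact Nat.not_dvd_of_pos_of_lt two_pos (lt_self_pow₀ one_lt_two (by lia))
  have fixes_base : σ ((1 : G) : G ⧸ H) = (1 : G) := by
    rw [← stabilizer_quotient H] at hyH
    exact hyH
  calc 2 ^ (k + 1) + 2
      ≤ σ.support.card := two_pow_add_two_le_card_support_of_sign_eq_one order_eq
        (sign_toPerm_eq_one_of_sq_ne_one sq_ne_one)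
    _ < Fintype.card (G ⧸ H) :=
        Finset.card_lt_univ_of_notMem (notMem_support.2 fixes_base)
    _ = H.index := by rw [Subgroup.index_eq_card, Nat.card_eq_fintype_card]

end SimpleGroup

section AlternatingSix

variable {α : Type*} [Fintype α] [DecidableEq α] {H : Subgroup (alternatingGroup α)}
  {x y : alternatingGroup α}

theorem isPretransitive_of_orderOf_eq_five_of_orderOf_eq_four (hα : Nat.card α = 6)
    (hxH : x ∈ H) (hyH : y ∈ H) (hx : orderOf x = 5) (hy : orderOf y = 4) :
    IsPretransitive H α := by
  rw [← Subgroup.orderOf_coe] at hx hy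
  have x_isCycle : (x : Equiv.Perm α).IsCycle := isCycle_of_prime_order'
    (hx ▸ Nat.prime_five) (by rw [hx, ← Nat.card_eq_fintype_card, hα]; norm_num)
  obtain ⟨a, ha⟩ := exists_isCycleOn_compl_singleton x_isCycle
    (by rw [← x_isCycle.orderOf, hx, hα])
  have y_support : (y : Equiv.Perm α).support = Finset.univ := by
    refine Finset.eq_univ_of_card _ (le_antisymm (Finset.card_le_univ _) ?_)
    rw [← Nat.card_eq_fintype_card, hα]
    exact two_pow_add_two_le_card_support_of_sign_eq_one (k := 1) hy (mem_alternatingGroup.1 y.2)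
  have y_moves : (y : Equiv.Perm α) a ≠ a := mem_support.1 (y_support ▸ Finset.mem_univ a)
  exact isPretransitive_of_isCycleOn_compl_singleton (x := (⟨x, hxH⟩ : H)) (y := ⟨y, hyH⟩)
    ha y_moves

theorem index_le_six_of_orderOf_eq_five_of_orderOf_eq_four (hα : Nat.card α = 6)
    (hxH : x ∈ H) (hyH : y ∈ H) (hx : orderOf x = 5) (hy : orderOf y = 4) : H.index ≤ 6 := by
  have : Nontrivial α := Finite.one_lt_card_iff_nontrivial.1 (by lia)
  have : IsPretransitive H α :=
    isPretransitive_of_orderOf_eq_five_of_orderOf_eq_four hα hxH hyH hx hy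
  have four_dvd : 4 ∣ Nat.card H := hy ▸ H.orderOf_dvd_natCard hyH
  have five_dvd : 5 ∣ Nat.card H := hx ▸ H.orderOf_dvd_natCard hxH
  have six_dvd : 6 ∣ Nat.card H := by
    obtain ⟨a⟩ : Nonempty α := inferInstance
    rw [← hα, ← index_stabilizer_of_transitive H a]
    exact (stabilizer H a).index_dvd_card
  have sixty_le : 60 ≤ Nat.card H := Nat.le_of_dvd Nat.card_pos (by lia)
  have card_mul_index : Nat.card H * H.index = 360 := by
    rw [H.card_mul_index, nat_card_alternatingGroup, hα]
    rfl
  nlinarith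

theorem eq_top_of_orderOf_eq_five_of_orderOf_eq_four (hα : Nat.card α = 6)
    (hxH : x ∈ H) (hyH : y ∈ H) (hx : orderOf x = 5) (hy : orderOf y = 4) : H = ⊤ := by
  have : IsSimpleGroup (alternatingGroup α) := alternatingGroup.isSimpleGroup (by lia)
  by_contra hH
  have six_lt : 6 < H.index := two_pow_add_two_lt_index_of_mem hH hyH le_rfl hy
  exact six_lt.not_ge (index_le_six_of_orderOf_eq_five_of_orderOf_eq_four hα hxH hyH hx hy)

theorem alternating_six_invariable_generation_general (hα : Nat.card α = 6)
    (hx : orderOf x = 5) (hy : orderOf y = 4) (g h : alternatingGroup α) :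
    Subgroup.closure {g⁻¹ * x * g, h⁻¹ * y * h} = ⊤ := by
  have orderOf_conj (a b : alternatingGroup α) : orderOf (a⁻¹ * b * a) = orderOf b := by
    simpa using (MulAut.conj a⁻¹).orderOf_eq b
  exact eq_top_of_orderOf_eq_five_of_orderOf_eq_four hα
    (Subgroup.subset_closure (Set.mem_insert _ _))
    (Subgroup.subset_closure (Set.mem_insert_of_mem _ rfl))
    ((orderOf_conj g x).trans hx) ((orderOf_conj h y).trans hy)

end AlternatingSix

/-- `A_6` is generated invariably by a `5`-cycle and an element of cycle type `(4,2)`. -/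
theorem alternating_six_invariable_generation
    (x y : alternatingGroup (Fin 6))
    (hx : (x : Equiv.Perm (Fin 6)).cycleType = {5})
    (hy : (y : Equiv.Perm (Fin 6)).cycleType = {4, 2}) :
    ∀ g h : alternatingGroup (Fin 6),
      Subgroup.closure {g⁻¹ * x * g, h⁻¹ * y * h} = ⊤ :=
  alternating_six_invariable_generation_general (Nat.card_fin 6)
    (by rw [← Subgroup.orderOf_coe, ← lcm_cycleType, hx]; rfl)
    (by rw [← Subgroup.orderOf_coe, ← lcm_cycleType, hy]; rfl)
end

section
/- Let x, y ∈ A_7 with x of cycle type {7} (a 7-cycle) and y of cycle type {5} (a 5-cycle). Then for all g, h ∈ A_7, the subgroup of A_7 generated by g⁻¹xg and h⁻¹yh is all of A_7. -/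
/-!
Let `G ≤ A₇` contain a `7`-cycle and a `5`-cycle. The `7`-cycle makes `G` transitive of prime
degree, hence primitive, and Jordan's criterion applied to the `5`-cycle makes `G` triply
transitive, so `|G| = 210 m` with `m` the order of the pointwise stabilizer of any three points.
An involution of `G` is even, so it moves exactly four points and fixes three; hence `m ≥ 2` and
`G` has index at most `6` in `A₇`. The action of the simple group `A₇` on the cosets of `G` cannot
be faithful, as `6! < |A₇|`, so it is trivial and `G = A₇`. All of this depends only on cycle
types, which conjugation preserves.
-/

open Equiv Equiv.Perm MulAction
open scoped Nat

section IndexBound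

theorem subgroup_eq_top_of_factorial_index_lt_card {G : Type*} [Group G] [IsSimpleGroup G]
    {H : Subgroup G} (h : H.index ! < Nat.card G) : H = ⊤ := by
  have : Finite G := Nat.finite_of_card_ne_zero (by omega)
  rcases H.normalCore_normal.eq_bot_or_eq_top with hbot | htop
  · rw [Subgroup.normalCore_eq_ker, MonoidHom.ker_eq_bot_iff] at hbot
    have hle : Nat.card G ≤ H.index ! :=
      (Nat.card_le_card_of_injective _ hbot).trans_eq Nat.card_perm
    exact absurd h hle.not_gt
  · exact top_le_iff.mp (htop ▸ H.normalCore_le)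

theorem alternatingGroup_le_of_relIndex_lt_card {α : Type*} [Fintype α] [DecidableEq α]
    {G : Subgroup (Perm α)} (hα : 5 ≤ Nat.card α)
    (hG : G.relIndex (alternatingGroup α) < Nat.card α) : alternatingGroup α ≤ G := by
  have : IsSimpleGroup (alternatingGroup α) := alternatingGroup.isSimpleGroup hα
  have : Nontrivial α := Finite.one_lt_card_iff_nontrivial.mp (by omega)
  have hlt : 2 * (G.relIndex (alternatingGroup α))! < 2 * Nat.card (alternatingGroup α) :=
    calc
      2 * (G.relIndex (alternatingGroup α))! ≤ 2 * (Nat.card α - 1)! := by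
        gcongr
        omega
      _ < Nat.card α * (Nat.card α - 1)! := by
        gcongr
        omega
      _ = 2 * Nat.card (alternatingGroup α) := by
        rw [Nat.mul_factorial_pred (by omega), two_mul_nat_card_alternatingGroup, Nat.card_perm]
  exact Subgroup.subgroupOf_eq_top.mp
    (subgroup_eq_top_of_factorial_index_lt_card (Nat.lt_of_mul_lt_mul_left hlt))

end IndexBound

section MultiplyTransitive

variable {G α : Type*} [Group G] [MulAction G α] [Finite α] {k : ℕ}

theorem descFactorial_mul_card_fixingSubgroup (hG : IsMultiplyPretransitive G α k) {s : Set α}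
    (hs : s.ncard = k) :
    (Nat.card α).descFactorial k * Nat.card (fixingSubgroup G s) = Nat.card G := by
  subst hs
  rw [← (fixingSubgroup G s).index_mul_card, hG.index_of_fixingSubgroup_eq,
    Nat.descFactorial_eq_factorial_mul_choose, mul_comm (s.ncard)!]

theorem descFactorial_dvd_card (hG : IsMultiplyPretransitive G α k) (hk : k ≤ Nat.card α) :
    (Nat.card α).descFactorial k ∣ Nat.card G := by
  obtain ⟨s, -, hs⟩ := Set.exists_subset_card_eq (s := (Set.univ : Set α)) (n := k)
    (by rwa [Set.ncard_univ])
  exact Dvd.intro _ (descFactorial_mul_card_fixingSubgroup hG hs)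

theorem two_mul_descFactorial_le_card_of_le_ncard_fixedBy [Finite G]
    (hG : IsMultiplyPretransitive G α k) {g : G} (hg : g ≠ 1) (hk : k ≤ (fixedBy α g).ncard) :
    2 * (Nat.card α).descFactorial k ≤ Nat.card G := by
  obtain ⟨s, hsg, hs⟩ := Set.exists_subset_card_eq hk
  have hgs : g ∈ fixingSubgroup G s := (mem_fixingSubgroup_iff G).mpr fun _ ha ↦ hsg ha
  have : Nontrivial (fixingSubgroup G s) :=
    (Subgroup.nontrivial_iff_exists_ne_one _).mpr ⟨g, hgs, hg⟩
  rw [← descFactorial_mul_card_fixingSubgroup hG hs, mul_comm]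
  exact Nat.mul_le_mul_left _ Finite.one_lt_card

end MultiplyTransitive

section Perm

variable {α : Type*} [Fintype α] [DecidableEq α] {G : Subgroup (Perm α)}

theorem ncard_compl_support (g : Perm α) :
    ((g.support : Set α)ᶜ).ncard = Nat.card α - g.support.card := by
  rw [Set.ncard_compl, Set.ncard_coe_finset]

theorem four_dvd_card_support_of_sq_eq_one {t : Perm α} (ht : t ^ 2 = 1)
    (hta : t ∈ alternatingGroup α) : 4 ∣ t.support.card := by
  have hrep : t.cycleType = Multiset.replicate t.cycleType.card 2 :=
    cycleType_of_pow_prime_eq_one ht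
  have hsum : t.support.card = t.cycleType.card * 2 := by
    rw [← sum_cycleType, hrep]
    simp
  have heven : Even t.cycleType.card := by
    rw [mem_alternatingGroup, sign_of_cycleType, sum_cycleType, hsum, pow_add,
      (even_two.mul_left _).neg_one_pow, one_mul] at hta
    exact (neg_one_pow_eq_one_iff_even (by decide)).mp hta
  obtain ⟨m, hm⟩ := heven
  exact ⟨m, by omega⟩

theorem two_mul_descFactorial_le_card_of_le_alternatingGroup {k : ℕ}
    (hG : IsMultiplyPretransitive G α k) (hGA : G ≤ alternatingGroup α) (h2 : 2 ∣ Nat.card G)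
    (hα : Nat.card α < 8) (hk : k + 4 ≤ Nat.card α) :
    2 * (Nat.card α).descFactorial k ≤ Nat.card G := by
  obtain ⟨t, ht⟩ := exists_prime_orderOf_dvd_card' (G := G) 2 h2
  have ht1 : t ≠ 1 := by
    rintro rfl
    simp at ht
  have hsq : (t : Perm α) ^ 2 = 1 := by
    rw [← orderOf_dvd_iff_pow_eq_one, Subgroup.orderOf_coe, ht]
  have hsupp : (t : Perm α).support.card ≤ 4 := by
    have hdvd := four_dvd_card_support_of_sq_eq_one hsq (hGA t.2)
    have hle : (t : Perm α).support.card ≤ Nat.card α := by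
      simpa using Finset.card_le_univ (t : Perm α).support
    omega
  have hfix : fixedBy α t = ((t : Perm α).support : Set α)ᶜ := by
    ext a
    simp [Subgroup.smul_def]
  apply two_mul_descFactorial_le_card_of_le_ncard_fixedBy hG ht1
  rw [hfix, ncard_compl_support]
  omega

theorem isPretransitive_of_isCycle_mem_of_support_eq_univ {g : Perm α} (hgc : g.IsCycle)
    (hgs : g.support = Finset.univ) (hg : g ∈ G) : IsPretransitive G α := by
  have hmove (a : α) : g a ≠ a := by simp [← mem_support, hgs]
  refine ⟨fun a b ↦ ?_⟩
  obtain ⟨i, hi⟩ := hgc.sameCycle (hmove a) (hmove b)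
  exact ⟨⟨g ^ i, G.zpow_mem hg i⟩, hi⟩

theorem isMultiplyPretransitive_of_isCycle_mem_of_prime (hG : IsPreprimitive G α) {g : Perm α}
    (hgc : g.IsCycle) (hgp : g.support.card.Prime) (hg : g ∈ G) :
    IsMultiplyPretransitive G α (Nat.card α - g.support.card + 1) := by
  rcases hn : Nat.card α - g.support.card with - | n
  · rw [zero_add, is_one_pretransitive_iff]
    infer_instance
  have hcard : Nat.card (SubMulAction.ofFixingSubgroup G (g.support : Set α)ᶜ) =
      g.support.card := by
    change Nat.card ↥((g.support : Set α)ᶜᶜ) = _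
    rw [compl_compl, Nat.card_coe_set_eq, Set.ncard_coe_finset]
  have hprim : IsPreprimitive (fixingSubgroup G (g.support : Set α)ᶜ)
      (SubMulAction.ofFixingSubgroup G (g.support : Set α)ᶜ) := by
    have := isPretransitive_of_isCycle_mem hgc hg
    exact IsPreprimitive.of_prime_card (hcard ▸ hgp)
  have hmp := hG.isMultiplyPreprimitive ((ncard_compl_support g).trans hn)
    (by have := hgp.two_le; omega) hprim
  exact hmp.isMultiplyPretransitive

theorem eq_alternatingGroup_of_isPreprimitive_of_cycleType_eq_five (hα : Nat.card α = 7)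
    (hGA : G ≤ alternatingGroup α) (hG : IsPreprimitive G α) {g : Perm α}
    (hgt : g.cycleType = {5}) (hg : g ∈ G) : G = alternatingGroup α := by
  have hsupp : g.support.card = 5 := by rw [← sum_cycleType, hgt, Multiset.sum_singleton]
  have htrans : IsMultiplyPretransitive G α 3 := by
    simpa only [hα, hsupp] using isMultiplyPretransitive_of_isCycle_mem_of_prime hG
      (card_cycleType_eq_one.mp (by simp [hgt])) (hsupp ▸ Nat.prime_five) hg
  have hdesc : (Nat.card α).descFactorial 3 = 210 := by rw [hα]; rfl
  have heven : 2 ∣ Nat.card G :=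
    (by norm_num : 2 ∣ 210).trans (hdesc ▸ descFactorial_dvd_card htrans (by omega))
  have hcard : 420 ≤ Nat.card G := by
    simpa only [hdesc] using two_mul_descFactorial_le_card_of_le_alternatingGroup htrans hGA heven
      (by omega) (by omega)
  have hA : Nat.card (alternatingGroup α) = 2520 := by
    have : Nontrivial α := Finite.one_lt_card_iff_nontrivial.mp (by omega)
    rw [nat_card_alternatingGroup, hα]
    rfl
  have hindex : Nat.card G * G.relIndex (alternatingGroup α) = 2520 := by
    rw [← hA, ← Subgroup.relIndex_bot_left, Subgroup.relIndex_mul_relIndex _ _ _ bot_le hGA,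
      Subgroup.relIndex_bot_left]
  exact hGA.antisymm (alternatingGroup_le_of_relIndex_lt_card (by omega) (by nlinarith))

theorem alternating_seven_invariable_generation_general (hα : Nat.card α = 7) {x y : Perm α}
    (hx : x.cycleType = {7}) (hy : y.cycleType = {5}) (g h : Perm α) :
    Subgroup.closure {g⁻¹ * x * g, h⁻¹ * y * h} = alternatingGroup α := by
  set G := Subgroup.closure {g⁻¹ * x * g, h⁻¹ * y * h}
  have hconj (a b : Perm α) : (b⁻¹ * a * b).cycleType = a.cycleType := by
    simpa using cycleType_conj (σ := a) (τ := b⁻¹)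
  have hxt : (g⁻¹ * x * g).cycleType = {7} := (hconj x g).trans hx
  have hyt : (h⁻¹ * y * h).cycleType = {5} := (hconj y h).trans hy
  have hxG : g⁻¹ * x * g ∈ G := Subgroup.subset_closure (by simp)
  have hyG : h⁻¹ * y * h ∈ G := Subgroup.subset_closure (by simp)
  have hGA : G ≤ alternatingGroup α := by
    rw [Subgroup.closure_le, Set.pair_subset_iff]
    simp only [SetLike.mem_coe, mem_alternatingGroup, sign_of_cycleType, hxt, hyt]
    decide
  have hsupp : (g⁻¹ * x * g).support = Finset.univ := by
    rw [← Finset.card_eq_iff_eq_univ, ← sum_cycleType, hxt, ← Nat.card_eq_fintype_card, hα,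
      Multiset.sum_singleton]
  have htrans : IsPretransitive G α := isPretransitive_of_isCycle_mem_of_support_eq_univ
    (card_cycleType_eq_one.mp (by simp [hxt])) hsupp hxG
  have hprim : IsPreprimitive G α := IsPreprimitive.of_prime_card (by rw [hα]; norm_num)
  exact eq_alternatingGroup_of_isPreprimitive_of_cycleType_eq_five hα hGA hprim hyt hyG

end Perm

/-- `A_7` is generated invariably by a `7`-cycle and a `5`-cycle. -/
theorem alternating_seven_invariable_generation
    (x y : alternatingGroup (Fin 7))
    (hx : (x : Equiv.Perm (Fin 7)).cycleType = {7})
    (hy : (y : Equiv.Perm (Fin 7)).cycleType = {5}) :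
    ∀ g h : alternatingGroup (Fin 7),
      Subgroup.closure {g⁻¹ * x * g, h⁻¹ * y * h} = ⊤ := by
  intro g h
  apply Subgroup.map_injective (alternatingGroup (Fin 7)).subtype_injective
  rw [MonoidHom.map_closure, Set.image_pair, ← MonoidHom.range_eq_map, Subgroup.range_subtype]
  exact alternating_seven_invariable_generation_general (by simp) hx hy g h
end

section
/- In the symplectic group G = Sp(6, 𝔽₂) of 6 × 6 matrices over 𝔽₂ = ZMod 2 preserving the standard symplectic form, there exist a Sylow 3-subgroup P and an element x of order 7 such that for all g, h ∈ G, the subgroup of G generated by g⁻¹Pg ∪ {h⁻¹xh} is all of G. -/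
/-!
Let `K` be generated by a Sylow 3-subgroup and an element of order 7 acting without nonzero fixed
vectors, the former containing the rotations of the three hyperbolic planes and a cyclic shift of
these planes. Vectors with equally many nonzero plane components lie in one `K`-orbit. There are 9,
27 and 27 vectors with 1, 2 and 3 such components, and 7 divides the size of every orbit other than
`{0}`, so `K` is transitive on the nonzero vectors.

The rotation of the plane spanned by `e` and `f` is a product `T_e T_f` of two transvections. Moving
such relations around by elements of `K` shows that all transvections agree modulo `K`, in the sense
that `T_a T_b ∈ K` for all nonzero `a` and `b`. The seven transvections centred at the nonzero
vectors of a totally isotropic three-dimensional space multiply to 1. As seven is odd, one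
transvection, and therefore every transvection, lies in `K`.
-/

open Matrix MulAction

namespace InvariableGeneration

section Group

variable {G : Type*} [Group G]

lemma isPGroup_closure {p : ℕ} {s : Set G} (hcomm : ∀ x ∈ s, ∀ y ∈ s, x * y = y * x)
    (hpow : ∀ x ∈ s, x ^ p = 1) : IsPGroup p (Subgroup.closure s) := by
  have := Subgroup.isMulCommutative_closure hcomm
  suffices h : ∀ x ∈ Subgroup.closure s, x ^ p = 1 from
    fun x ↦ ⟨1, Subtype.ext (by simpa using h x x.2)⟩
  intro x hx
  induction hx using Subgroup.closure_induction with
  | mem x hx => exact hpow x hx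
  | one => exact one_pow p
  | mul x y hx hy ihx ihy => rw [Commute.mul_pow (setLike_mul_comm hx hy), ihx, ihy, one_mul]
  | inv x _ ih => rw [inv_pow, ih, inv_one]

lemma dvd_card_orbit {X : Type*} [MulAction G X] [Finite X] {p : ℕ} [Fact p.Prime]
    {H : Subgroup G} {y : G} (hy : y ∈ H) (hpow : y ^ p = 1) {x : X}
    (hfix : ∀ z ∈ orbit H x, y • z ≠ z) : p ∣ Nat.card (orbit H x) := by
  let y' : H := ⟨y, hy⟩
  have hy' : IsPGroup p (Subgroup.zpowers y') := by
    rw [Subgroup.zpowers_eq_closure]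
    refine isPGroup_closure (by simp) ?_
    rintro _ rfl
    exact Subtype.ext hpow
  have no_fixedPoints : IsEmpty (fixedPoints (Subgroup.zpowers y') (orbit H x)) :=
    ⟨fun z ↦ hfix z z.1.2 (congrArg Subtype.val (z.2 ⟨y', Subgroup.mem_zpowers y'⟩))⟩
  rw [← Nat.modEq_zero_iff_dvd]
  simpa only [Nat.card_of_isEmpty] using hy'.card_modEq_card_fixedPoints (orbit H x)

lemma closure_conj_eq_top {P : Subgroup G} {x : G}
    (h : ∀ k, Subgroup.closure (P ∪ {k * x * k⁻¹}) = ⊤) (g k : G) :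
    Subgroup.closure ({z | ∃ a ∈ P, z = g⁻¹ * a * g} ∪ {k⁻¹ * x * k}) = ⊤ := by
  have image_eq : {z | ∃ a ∈ P, z = g⁻¹ * a * g} ∪ {k⁻¹ * x * k} =
      MulAut.conj g⁻¹ '' (P ∪ {(g * k⁻¹) * x * (g * k⁻¹)⁻¹}) := by
    rw [Set.image_union, Set.image_singleton]
    congr 1
    · ext z
      simp [eq_comm]
    · simp [mul_assoc]
  rw [image_eq, ← MulEquiv.coe_toMonoidHom, ← MonoidHom.map_closure, h, ← MonoidHom.range_eq_map,
    MonoidHom.range_eq_top]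
  exact (MulAut.conj g⁻¹).surjective

end Group

lemma card_hammingNorm_eq (l A : Type*) [Fintype l] [DecidableEq l] [Fintype A] [DecidableEq A]
    [Zero A] (k : ℕ) :
    Finset.card {p : l → A | hammingNorm p = k} =
      (Fintype.card l).choose k * (Fintype.card A - 1) ^ k := by
  have card_support (s : Finset l) :
      Finset.card {p : l → A | ({i | p i ≠ 0} : Finset l) = s} = (Fintype.card A - 1) ^ s.card := by
    have : ({p : l → A | ({i | p i ≠ 0} : Finset l) = s} : Finset (l → A)) =
        Fintype.piFinset fun i ↦ if i ∈ s then {0}ᶜ else {0} := by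
      ext p
      simp only [Finset.mem_filter_univ, Finset.ext_iff, Fintype.mem_piFinset]
      exact forall_congr' fun i ↦ by by_cases hi : i ∈ s <;> simp [hi]
    rw [this, Fintype.card_piFinset]
    simp [apply_ite Finset.card, Finset.prod_ite_mem, Finset.card_compl]
  calc
    Finset.card {p : l → A | hammingNorm p = k}
      = ∑ s ∈ Finset.powersetCard k Finset.univ,
          Finset.card {p : l → A | ({i | p i ≠ 0} : Finset l) = s} := by
        rw [Finset.card_eq_sum_card_fiberwise (f := fun p ↦ ({i | p i ≠ 0} : Finset l))
          (t := Finset.univ.powersetCard k) fun p hp ↦ by simpa [hammingNorm] using hp]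
        refine Finset.sum_congr rfl fun s hs ↦ ?_
        rw [Finset.filter_filter]
        congr! 3
        refine and_iff_right_of_imp ?_
        rintro rfl
        exact Finset.mem_powersetCard_univ.1 hs
    _ = ∑ s ∈ Finset.powersetCard k (Finset.univ : Finset l), (Fintype.card A - 1) ^ k :=
        Finset.sum_congr rfl fun s hs ↦ by
          rw [card_support, Finset.mem_powersetCard_univ.1 hs]
    _ = (Fintype.card l).choose k * (Fintype.card A - 1) ^ k := by simp

/-- The standard symplectic form on `R^(l ⊕ l)`, whose Gram matrix is `J`. -/
def form (l R : Type*) [Fintype l] [DecidableEq l] [CommRing R] :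
    LinearMap.BilinForm R (l ⊕ l → R) :=
  Matrix.toBilin' (J l R)

local notation "ω" => form _ _

section Transvection

variable {l R : Type*} [Fintype l] [DecidableEq l] [CommRing R]

lemma form_apply (v w : l ⊕ l → R) :
    ω v w = ∑ i, (v (.inr i) * w (.inl i) - v (.inl i) * w (.inr i)) := by
  simp [form, Matrix.toBilin'_apply', J, fromBlocks_mulVec, dotProduct, neg_mulVec,
    sub_eq_neg_add, Finset.sum_add_distrib]

lemma form_isAlt : (form l R).IsAlt := fun v ↦ by
  rw [form_apply]
  exact Finset.sum_eq_zero fun i _ ↦ by ring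

lemma form_swap (v w : l ⊕ l → R) : ω v w = -ω w v :=
  (form_isAlt.neg_eq w v).symm

lemma mem_symplecticGroup_iff_form {A : Matrix (l ⊕ l) (l ⊕ l) R} :
    A ∈ symplecticGroup l R ↔ ∀ v w, ω (A *ᵥ v) (A *ᵥ w) = ω v w := by
  have pullback (v w : l ⊕ l → R) :
      ω (A *ᵥ v) (A *ᵥ w) = Matrix.toBilin' (Aᵀ * J l R * A) v w := by
    simp only [form, Matrix.toBilin'_apply', ← mulVec_mulVec, dotProduct_mulVec v, vecMul_transpose]
  simp_rw [SymplecticGroup.mem_iff', pullback, form, ← LinearMap.ext_iff₂,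
    EmbeddingLike.apply_eq_iff_eq]

lemma form_smul_smul (A : symplecticGroup l R) (v w : l ⊕ l → R) : ω (A • v) (A • w) = ω v w :=
  mem_symplecticGroup_iff_form.1 A.2 v w

lemma eq_of_forall_smul_eq {A B : symplecticGroup l R} (h : ∀ v : l ⊕ l → R, A • v = B • v) :
    A = B :=
  Subtype.ext (ext_of_mulVec_single fun _ ↦ h _)

/-- The symplectic transvection `v ↦ v + c ω(a, v) a` with centre `a`. -/
def transvection (a : l ⊕ l → R) (c : R) : symplecticGroup l R where
  val := LinearMap.toMatrix' (LinearMap.transvection (c • ω a) a)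
  property := mem_symplecticGroup_iff_form.2 fun v w ↦ by
    simp only [LinearMap.toMatrix'_mulVec, LinearMap.transvection.apply, LinearMap.smul_apply,
      map_add, LinearMap.add_apply, map_smul, smul_eq_mul, form_isAlt.self_eq_zero a,
      form_swap v a]
    ring

lemma transvection_smul (a : l ⊕ l → R) (c : R) (v : l ⊕ l → R) :
    transvection a c • v = v + (c * ω a v) • a :=
  LinearMap.toMatrix'_mulVec _ _

lemma transvection_zero (a : l ⊕ l → R) : transvection a 0 = 1 :=
  eq_of_forall_smul_eq fun v ↦ by simp [transvection_smul]

lemma transvection_zero_left (c : R) : transvection (0 : l ⊕ l → R) c = 1 :=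
  eq_of_forall_smul_eq fun v ↦ by simp [transvection_smul]

lemma transvection_mul (a : l ⊕ l → R) (c d : R) :
    transvection a c * transvection a d = transvection a (c + d) :=
  eq_of_forall_smul_eq fun v ↦ by
    simp only [mul_smul, transvection_smul, map_add, map_smul, form_isAlt.self_eq_zero]
    module

lemma mul_transvection_mul_inv (A : symplecticGroup l R) (a : l ⊕ l → R) (c : R) :
    A * transvection a c * A⁻¹ = transvection (A • a) c := by
  rw [mul_inv_eq_iff_eq_mul]
  refine eq_of_forall_smul_eq fun v ↦ ?_
  simp only [mul_smul, transvection_smul, smul_add, form_smul_smul, smul_comm A]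

/-- The vector `e i` of the standard symplectic basis. -/
def e (i : l) : l ⊕ l → R := Pi.single (.inl i) 1

lemma e_ne_zero {l R : Type*} [DecidableEq l] [CommRing R] [Nontrivial R] (i : l) :
    (e i : l ⊕ l → R) ≠ 0 := by
  simp [e]

/-- The vector `f i` of the standard symplectic basis, paired with `e i`. -/
def f (i : l) : l ⊕ l → R := Pi.single (.inr i) 1

lemma form_e (i : l) (v : l ⊕ l → R) : ω (e i) v = -v (.inr i) := by
  simp [form_apply, e, Pi.single_apply]

lemma form_f (i : l) (v : l ⊕ l → R) : ω (f i) v = v (.inl i) := by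
  simp [form_apply, f, Pi.single_apply]

end Transvection

/-! ### Generation by transvections -/

section Generation

variable {l F : Type*} [Fintype l] [DecidableEq l] [Field F] {K : Subgroup (symplecticGroup l F)}
  {S : Set (l ⊕ l → F)}

lemma mem_orbit_fixing_of_form_ne_zero (hK : ∀ a c, transvection a c ∈ K) {u v : l ⊕ l → F}
    (huv : ω u v ≠ 0) (hS : ∀ s ∈ S, ω u s = ω v s) :
    v ∈ orbit ↥(K ⊓ fixingSubgroup (symplecticGroup l F) S) u := by
  have hvu : ω v u ≠ 0 := by rwa [form_swap, neg_ne_zero]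
  refine ⟨⟨transvection (v - u) (ω v u)⁻¹, hK _ _, ?_⟩, ?_⟩
  · exact (mem_fixingSubgroup_iff _).2 fun s hs ↦ by simp [transvection_smul, hS s hs]
  · simp [Subgroup.smul_def, transvection_smul, form_isAlt.self_eq_zero, hvu]

lemma mem_orbit_fixing_of_orthogonal (hK : ∀ a c, transvection a c ∈ K) {u v u' v' : l ⊕ l → F}
    (huu' : ω u u' ≠ 0) (hvv' : ω v v' ≠ 0) (hu : ∀ s ∈ S, ω u s = 0) (hv : ∀ s ∈ S, ω v s = 0)
    (hu' : ∀ s ∈ S, ω u' s = 0) (hv' : ∀ s ∈ S, ω v' s = 0) :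
    v ∈ orbit ↥(K ⊓ fixingSubgroup (symplecticGroup l F) S) u := by
  obtain ⟨z, huz, hvz, hz⟩ : ∃ z, ω u z ≠ 0 ∧ ω v z ≠ 0 ∧ ∀ s ∈ S, ω z s = 0 := by
    by_cases huv' : ω u v' = 0
    · by_cases hvu' : ω v u' = 0
      · exact ⟨u' + v', by simpa [huv'], by simpa [hvu'], fun s hs ↦ by simp [hu' s hs, hv' s hs]⟩
      · exact ⟨u', huu', hvu', hu'⟩
    · exact ⟨v', huv', hvv', hv'⟩
  have hzv : ω z v ≠ 0 := by rwa [form_swap, neg_ne_zero]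
  rw [← orbit_eq_iff.2 (mem_orbit_fixing_of_form_ne_zero hK huz
    fun s hs ↦ (hu s hs).trans (hz s hs).symm)]
  exact mem_orbit_fixing_of_form_ne_zero hK hzv fun s hs ↦ (hz s hs).trans (hv s hs).symm

lemma mem_orbit_fixing_of_hyperbolic_pair (hK : ∀ a c, transvection a c ∈ K) {e v w : l ⊕ l → F}
    (hev : ω e v ≠ 0) (hvw : ω v e = ω w e) (he : ∀ s ∈ S, ω e s = 0)
    (hS : ∀ s ∈ S, ω v s = ω w s) :
    w ∈ orbit ↥(K ⊓ fixingSubgroup (symplecticGroup l F) (insert e S)) v := by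
  have agree : ∀ s ∈ insert e S, ω v s = ω w s := by simpa [hvw] using hS
  by_cases hne : ω v w = 0
  · have hvz : ω v (v + e) ≠ 0 := by
      simpa [form_isAlt.self_eq_zero, form_swap v e] using hev
    have hzw : ω (v + e) w ≠ 0 := by
      simpa [hne, form_swap e w, ← hvw, form_swap v e] using hev
    have he' : ∀ s ∈ insert e S, ω e s = 0 := by simpa [form_isAlt.self_eq_zero] using he
    rw [← orbit_eq_iff.2 (mem_orbit_fixing_of_form_ne_zero hK hvz fun s hs ↦ by simp [he' s hs])]
    exact mem_orbit_fixing_of_form_ne_zero hK hzw fun s hs ↦ by simp [he' s hs, agree s hs]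
  · exact mem_orbit_fixing_of_form_ne_zero hK hne agree

lemma exists_smul_eq_of_mem_orbit_fixing {u v : l ⊕ l → F}
    (h : v ∈ orbit ↥(K ⊓ fixingSubgroup (symplecticGroup l F) S) u) :
    ∃ k ∈ K, k • u = v ∧ ∀ x ∈ S, k • x = x := by
  obtain ⟨⟨k, hkK, hkS⟩, hk⟩ := h
  exact ⟨k, hkK, hk, (mem_fixingSubgroup_iff _).1 hkS⟩

/-- The symplectic basis vectors with index in `s`. -/
def basisVectors (F : Type*) [Field F] (s : Finset l) : Set (l ⊕ l → F) := e '' s ∪ f '' s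

lemma form_eq_zero_of_mem_basisVectors {s : Finset l} {i : l} (hi : i ∉ s) {x : l ⊕ l → F}
    (hx : x ∈ basisVectors F s) : ω (e i) x = 0 ∧ ω (f i) x = 0 := by
  rw [form_e, form_f]
  obtain ⟨j, hj, rfl⟩ | ⟨j, hj, rfl⟩ := hx <;>
    simp [e, f, (ne_of_mem_of_not_mem hj hi).symm]

lemma exists_mul_mem_fixing_insert (hK : ∀ a c, transvection a c ∈ K) {s : Finset l} {j : l}
    (hj : j ∉ s) {A : symplecticGroup l F}
    (hA : A ∈ fixingSubgroup (symplecticGroup l F) (basisVectors F s)) :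
    ∃ k ∈ K, k * A ∈ fixingSubgroup (symplecticGroup l F) (basisVectors F (insert j s)) := by
  rw [mem_fixingSubgroup_iff] at hA
  have form_smul_basis (v : l ⊕ l → F) {x} (hx : x ∈ basisVectors F s) : ω (A • v) x = ω v x := by
    conv_lhs => rw [← hA x hx, form_smul_smul]
  have hej : ∀ x ∈ basisVectors F s, ω (e j) x = 0 := fun x hx ↦
    (form_eq_zero_of_mem_basisVectors hj hx).1
  have hfj : ∀ x ∈ basisVectors F s, ω (f j) x = 0 := fun x hx ↦
    (form_eq_zero_of_mem_basisVectors hj hx).2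
  have hef : ω (e j) (f j) ≠ (0 : F) := by simp [form_e, f]
  obtain ⟨k, hkK, hke, hkS⟩ := exists_smul_eq_of_mem_orbit_fixing <|
    mem_orbit_fixing_of_orthogonal (u := A • e j) (u' := A • f j) hK (by rwa [form_smul_smul]) hef
      (fun x hx ↦ (form_smul_basis _ hx).trans (hej x hx)) hej
      (fun x hx ↦ (form_smul_basis _ hx).trans (hfj x hx)) hfj
  have form_w (v : l ⊕ l → F) : ω (k • A • f j) (k • A • v) = ω (f j) v := by
    simp only [form_smul_smul]
  obtain ⟨m, hmK, hmf, hmS⟩ := exists_smul_eq_of_mem_orbit_fixing <|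
    mem_orbit_fixing_of_hyperbolic_pair (v := k • A • f j) (w := f j) (S := basisVectors F s) hK
      (by rw [← hke]; simpa only [form_smul_smul])
      (by conv_lhs => rw [← hke, form_w]) hej
      (fun x hx ↦ by conv_lhs => rw [← hkS x hx, ← hA x hx, form_w])
  refine ⟨m * k, mul_mem hmK hkK, (mem_fixingSubgroup_iff _).2 ?_⟩
  have fixes_old (x) (hx : x ∈ basisVectors F s) : m • k • A • x = x := by
    rw [hA x hx, hkS x hx, hmS x (.inr hx)]
  rintro x (⟨i, hi, rfl⟩ | ⟨i, hi, rfl⟩) <;> rw [mul_smul, mul_smul] <;>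
    obtain rfl | hi := Finset.mem_insert.1 hi
  · rw [hke, hmS _ (.inl rfl)]
  · exact fixes_old _ (.inl ⟨i, hi, rfl⟩)
  · exact hmf
  · exact fixes_old _ (.inr ⟨i, hi, rfl⟩)

theorem eq_top_of_forall_transvection_mem (hK : ∀ a c, transvection a c ∈ K) : K = ⊤ := by
  refine (Subgroup.eq_top_iff' K).2 fun A ↦ ?_
  have straighten (s : Finset l) :
      ∃ k ∈ K, k * A ∈ fixingSubgroup (symplecticGroup l F) (basisVectors F s) := by
    induction s using Finset.induction_on with
    | empty => exact ⟨1, one_mem K, by simp [basisVectors]⟩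
    | insert j s hj ih =>
      obtain ⟨k, hk, hkA⟩ := ih
      obtain ⟨m, hm, hmkA⟩ := exists_mul_mem_fixing_insert hK hj hkA
      exact ⟨m * k, mul_mem hm hk, by rwa [mul_assoc]⟩
  obtain ⟨k, hk, hkA⟩ := straighten Finset.univ
  rw [mem_fixingSubgroup_iff] at hkA
  have hkA_one : k * A = 1 := by
    refine Subtype.ext (ext_of_mulVec_single fun i ↦ ?_)
    rw [OneMemClass.coe_one, one_mulVec]
    obtain i | i := i
    · exact hkA _ (.inl ⟨i, Finset.mem_coe.2 (Finset.mem_univ i), rfl⟩)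
    · exact hkA _ (.inr ⟨i, Finset.mem_coe.2 (Finset.mem_univ i), rfl⟩)
  exact (mul_mem_cancel_left hk).1 (hkA_one ▸ one_mem K)

end Generation

/-! ### Hyperbolic planes -/

section HyperbolicPlanes

variable {l R : Type*} [CommRing R]

/-- Assembles a vector from its components in the hyperbolic planes spanned by `e i` and `f i`. -/
def ofPlanes (l R : Type*) [CommRing R] : (l → R × R) ≃ₗ[R] (l ⊕ l → R) where
  toFun p := Sum.elim (fun i ↦ (p i).1) (fun i ↦ (p i).2)
  invFun v i := (v (.inl i), v (.inr i))
  map_add' _ _ := by ext (i | i) <;> rfl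
  map_smul' _ _ := by ext (i | i) <;> rfl
  right_inv _ := by ext (i | i) <;> rfl

@[simp]
lemma ofPlanes_inl (p : l → R × R) (i : l) : ofPlanes l R p (.inl i) = (p i).1 := rfl

@[simp]
lemma ofPlanes_inr (p : l → R × R) (i : l) : ofPlanes l R p (.inr i) = (p i).2 := rfl

variable [DecidableEq l]

/-- The vector `x.1 • e i + x.2 • f i` of the `i`-th hyperbolic plane. -/
def inPlane (i : l) : R × R →ₗ[R] (l ⊕ l → R) :=
  (ofPlanes l R).toLinearMap ∘ₗ LinearMap.single R (fun _ ↦ R × R) i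

lemma inPlane_apply (i : l) (x : R × R) : inPlane i x = ofPlanes l R (Pi.single i x) := rfl

lemma inPlane_eq_add (i : l) (x : R × R) : inPlane i x = x.1 • e i + x.2 • f i := by
  ext (j | j) <;> by_cases h : j = i <;> simp [inPlane_apply, e, f, h]

lemma sum_inPlane [Fintype l] (p : l → R × R) : ∑ i, inPlane i (p i) = ofPlanes l R p := by
  simp_rw [inPlane_apply, ← map_sum, Finset.univ_sum_single]

variable [Fintype l]

lemma form_ofPlanes (p q : l → R × R) :
    ω (ofPlanes l R p) (ofPlanes l R q) = ∑ i, ((p i).2 * (q i).1 - (p i).1 * (q i).2) :=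
  form_apply _ _

lemma form_inPlane_ofPlanes (i : l) (x : R × R) (q : l → R × R) :
    ω (inPlane i x) (ofPlanes l R q) = x.2 * (q i).1 - x.1 * (q i).2 := by
  rw [inPlane_apply, form_ofPlanes, Finset.sum_eq_single i] <;> simp +contextual

lemma form_inPlane_of_ne {i j : l} (h : i ≠ j) (x y : R × R) :
    ω (inPlane i x) (inPlane j y) = 0 := by
  simp [inPlane_apply j, form_inPlane_ofPlanes, h]

/-- The map `(x, y) ↦ (-y, x + y)`, which has order `3` in characteristic two. -/
def rotate (x : R × R) : R × R := (-x.2, x.1 + x.2)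

/-- The symplectic matrix acting as `rotate` on the `i`-th hyperbolic plane and trivially on the
others. -/
def planeRotation (i : l) : symplecticGroup l R := transvection (e i) 1 * transvection (f i) 1

lemma planeRotation_smul_ofPlanes (i : l) (p : l → R × R) :
    (planeRotation i : symplecticGroup l R) • ofPlanes l R p =
      ofPlanes l R (Function.update p i (rotate (p i))) := by
  rw [planeRotation, mul_smul, transvection_smul, transvection_smul, form_e, form_f]
  ext (j | j) <;> by_cases h : j = i <;> simp [e, f, rotate, h, add_comm]

end HyperbolicPlanes

section BinaryField

variable {l : Type*} [Fintype l] [DecidableEq l]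

lemma form_inPlane_eq_one (i : l) {x y : ZMod 2 × ZMod 2} (hx : x ≠ 0) (hy : y ≠ 0) (hxy : x ≠ y) :
    ω (inPlane i x) (inPlane i y) = 1 := by
  rw [inPlane_apply i y, form_inPlane_ofPlanes, Pi.single_eq_same]
  decide +revert

lemma form_inPlane_eq_zero_iff (i : l) {x y : ZMod 2 × ZMod 2} (hx : x ≠ 0) :
    ω (inPlane i x) (inPlane i y) = 0 ↔ y = 0 ∨ y = x := by
  rw [inPlane_apply i y, form_inPlane_ofPlanes, Pi.single_eq_same]
  have (x y : ZMod 2 × ZMod 2) (_ : x ≠ 0) : x.2 * y.1 - x.1 * y.2 = 0 ↔ y = 0 ∨ y = x := by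
    decide +revert
  exact this x y hx

lemma transvection_one_mul_self (a : l ⊕ l → ZMod 2) :
    transvection a 1 * transvection a 1 = 1 := by
  rw [transvection_mul, show (1 : ZMod 2) + 1 = 0 from rfl, transvection_zero]

lemma transvection_one_inv (a : l ⊕ l → ZMod 2) : (transvection a 1)⁻¹ = transvection a 1 :=
  inv_eq_of_mul_eq_one_left (transvection_one_mul_self a)

-- Transvections with pairwise orthogonal centres `a` compose to `v ↦ v + ∑ ω(a, v) a`. The summand
-- is quadratic in `a`, so its sum over a three-dimensional space vanishes modulo two.
lemma seven_transvections {r s t : l ⊕ l → ZMod 2} (hrs : ω r s = 0) (hrt : ω r t = 0)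
    (hst : ω s t = 0) :
    transvection r 1 * transvection s 1 * transvection t 1 * transvection (r + s) 1 *
      transvection (r + t) 1 * transvection (s + t) 1 * transvection (r + s + t) 1 = 1 := by
  refine eq_of_forall_smul_eq fun v ↦ ?_
  simp only [mul_smul, transvection_smul, map_add, map_smul, LinearMap.add_apply,
    form_isAlt.self_eq_zero, hrs, hrt, hst, form_swap s r, form_swap t r, form_swap t s, one_mul,
    one_smul, smul_eq_mul, mul_zero, neg_zero, add_zero]
  match_scalars <;> ring_nf <;> reduce_mod_char

end BinaryField

/-! ### Linked transvections -/

section Linked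

variable {l : Type*} [Fintype l] [DecidableEq l] {K : Subgroup (symplecticGroup l (ZMod 2))}
  {a b c : l ⊕ l → ZMod 2}

/-- Two centres are linked when the transvections at them agree modulo `K`. -/
def Linked (K : Subgroup (symplecticGroup l (ZMod 2))) (a b : l ⊕ l → ZMod 2) : Prop :=
  transvection a 1 * transvection b 1 ∈ K

lemma Linked.refl (K : Subgroup (symplecticGroup l (ZMod 2))) (a : l ⊕ l → ZMod 2) :
    Linked K a a := by
  rw [Linked, transvection_one_mul_self]
  exact one_mem K

lemma Linked.symm (h : Linked K a b) : Linked K b a := by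
  simpa only [Linked, _root_.mul_inv_rev, transvection_one_inv] using inv_mem h

lemma Linked.trans (hab : Linked K a b) (hbc : Linked K b c) : Linked K a c := by
  have := mul_mem hab hbc
  rwa [← mul_assoc, mul_assoc (transvection a 1), transvection_one_mul_self, mul_one] at this

lemma Linked.smul (h : Linked K a b) {k : symplecticGroup l (ZMod 2)} (hk : k ∈ K) :
    Linked K (k • a) (k • b) := by
  have := mul_mem (mul_mem hk h) (inv_mem hk)
  rwa [← conj_mul, mul_transvection_mul_inv, mul_transvection_mul_inv] at this

lemma Linked.add (h : Linked K a b) (hω : ω a b = 1) : Linked K b (a + b) := by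
  have smul_a : (transvection a 1 * transvection b 1) • a = b := by
    simp only [mul_smul, transvection_smul, form_swap b a, hω, map_add, map_smul,
      form_isAlt.self_eq_zero]
    match_scalars <;> rfl
  have smul_b : (transvection a 1 * transvection b 1) • b = a + b := by
    simp only [mul_smul, transvection_smul, hω, form_isAlt.self_eq_zero, mul_zero,
      zero_smul, add_zero]
    module
  simpa only [smul_a, smul_b] using h.smul h

lemma Linked.of_rotation {i : l} (hK : planeRotation i ∈ K)
    {x y : ZMod 2 × ZMod 2} (hx : x ≠ 0) (hy : y ≠ 0) :
    Linked K (inPlane i x) (inPlane i y) := by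
  have link_ef : Linked K (inPlane i (1, 0)) (inPlane i (0, 1)) := by
    simpa [Linked, planeRotation, inPlane_eq_add] using hK
  have link_f_sum := link_ef.add (form_inPlane_eq_one i (by decide) (by decide) (by decide))
  rw [← map_add] at link_f_sum
  have link_e {x : ZMod 2 × ZMod 2} (hx : x ≠ 0) : Linked K (inPlane i (1, 0)) (inPlane i x) := by
    obtain rfl | rfl | rfl : x = (1, 0) ∨ x = (0, 1) ∨ x = (1, 0) + (0, 1) := by decide +revert
    exacts [.refl K _, link_ef, link_ef.trans link_f_sum]
  exact (link_e hx).symm.trans (link_e hy)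

end Linked

/-! ### Permutations of the hyperbolic planes -/

section PlanePermutation

variable {l R : Type*} [Fintype l] [DecidableEq l] [CommRing R]

/-- The symplectic matrix `diag(A, A⁻ᵀ)`, the image of `A` in the Levi factor stabilizing the two
Lagrangian subspaces spanned by the `e i` and by the `f i`. -/
def levi (l R : Type*) [Fintype l] [DecidableEq l] [CommRing R] :
    GL l R →* symplecticGroup l R where
  toFun A := ⟨fromBlocks A 0 0 (↑A⁻¹ : Matrix l l R)ᵀ, SymplecticGroup.fromBlocks_mem_iff.2 (by
    simp [← transpose_mul])⟩
  map_one' := Subtype.ext (by simp)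
  map_mul' A B := Subtype.ext (by simp [fromBlocks_multiply, transpose_mul])

lemma levi_smul (A : GL l R) (v : l ⊕ l → R) :
    levi l R A • v = Sum.elim ((A : Matrix l l R) *ᵥ (v ∘ .inl))
      ((↑A⁻¹ : Matrix l l R)ᵀ *ᵥ (v ∘ .inr)) := by
  change fromBlocks _ _ _ _ *ᵥ v = _
  simp [fromBlocks_mulVec]

/-- The symplectic matrix permuting the hyperbolic planes. -/
def planePermutation (l R : Type*) [Fintype l] [DecidableEq l] [CommRing R] :
    Equiv.Perm l →* symplecticGroup l R :=
  (levi l R).comp permMatrixHom.toHomUnits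

lemma planePermutation_smul_ofPlanes (σ : Equiv.Perm l) (p : l → R × R) :
    planePermutation l R σ • ofPlanes l R p = ofPlanes l R (p ∘ ⇑σ⁻¹) := by
  change levi l R _ • _ = _
  rw [levi_smul, ← map_inv, MonoidHom.coe_toHomUnits, MonoidHom.coe_toHomUnits]
  ext (i | i) <;> simp [permMatrix_mulVec]

lemma planePermutation_smul_inPlane (σ : Equiv.Perm l) (i : l) (x : R × R) :
    planePermutation l R σ • inPlane i x = inPlane (σ i) x := by
  rw [inPlane_apply, planePermutation_smul_ofPlanes, inPlane_apply]
  congr 1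
  funext j
  simp [Pi.single_apply, Equiv.symm_apply_eq]

lemma conj_planeRotation (σ : Equiv.Perm l) (i : l) :
    planePermutation l R σ * planeRotation i * (planePermutation l R σ)⁻¹ =
      planeRotation (σ i) := by
  have smul_e : planePermutation l R σ • e i = (e (σ i) : l ⊕ l → R) := by
    simpa [inPlane_eq_add] using planePermutation_smul_inPlane σ i ((1, 0) : R × R)
  have smul_f : planePermutation l R σ • f i = (f (σ i) : l ⊕ l → R) := by
    simpa [inPlane_eq_add] using planePermutation_smul_inPlane σ i ((0, 1) : R × R)
  rw [planeRotation, ← conj_mul, mul_transvection_mul_inv, mul_transvection_mul_inv, smul_e, smul_f,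
    planeRotation]

lemma planeRotation_pow_smul_ofPlanes (n : ℕ) (i : l) (p : l → R × R) :
    (planeRotation i : symplecticGroup l R) ^ n • ofPlanes l R p =
      ofPlanes l R (Function.update p i (rotate^[n] (p i))) := by
  induction n with
  | zero => simp
  | succ n ih =>
    rw [pow_succ', mul_smul, ih, planeRotation_smul_ofPlanes, Function.iterate_succ_apply']
    simp

lemma planeRotation_pow_smul_inPlane_self (n : ℕ) (i : l) (x : R × R) :
    (planeRotation i : symplecticGroup l R) ^ n • inPlane i x = inPlane i (rotate^[n] x) := by
  simp [inPlane_apply, planeRotation_pow_smul_ofPlanes, Pi.single]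

lemma planeRotation_pow_smul_inPlane_of_ne (n : ℕ) {i j : l} (h : j ≠ i) (x : R × R) :
    (planeRotation i : symplecticGroup l R) ^ n • inPlane j x = inPlane j x := by
  have rotate_zero : rotate^[n] (0 : R × R) = 0 := Function.iterate_fixed (by simp [rotate]) n
  rw [inPlane_apply, planeRotation_pow_smul_ofPlanes, Pi.single_eq_of_ne' h, rotate_zero]
  congr 1
  simp [h.symm]

end PlanePermutation

lemma exists_iterate_rotate_eq {x y : ZMod 2 × ZMod 2} (hx : x ≠ 0) (hy : y ≠ 0) :
    ∃ n, rotate^[n] x = y := by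
  obtain ⟨n, hn⟩ : ∃ n : Fin 3, rotate^[n] x = y := by decide +revert
  exact ⟨n, hn⟩

section PlanesLinked

variable {l : Type*} [Fintype l] [DecidableEq l] {K : Subgroup (symplecticGroup l (ZMod 2))}
  {i j k : l} {a b x y z : ZMod 2 × ZMod 2}

lemma exists_mem_rotate (hi : planeRotation i ∈ K) (hx : x ≠ 0) (hy : y ≠ 0) :
    ∃ g ∈ K, g • inPlane i x = inPlane i y ∧
      ∀ j ≠ i, ∀ z : ZMod 2 × ZMod 2, g • inPlane j z = inPlane j z := by
  obtain ⟨n, rfl⟩ := exists_iterate_rotate_eq hx hy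
  exact ⟨planeRotation i ^ n, pow_mem hi n, planeRotation_pow_smul_inPlane_self n i x,
    fun j hj z ↦ planeRotation_pow_smul_inPlane_of_ne n hj z⟩

/-- All nonzero vectors of the `i`-th hyperbolic plane are linked to all nonzero vectors of the
`j`-th one, and to the sums of both. -/
def PlanesLinked (K : Subgroup (symplecticGroup l (ZMod 2))) (i j : l) : Prop :=
  ∀ x y, x ≠ 0 → y ≠ 0 → Linked K (inPlane i x) (inPlane j y) ∧
    Linked K (inPlane i x) (inPlane i x + inPlane j y)

lemma PlanesLinked.symm (h : PlanesLinked K i j) : PlanesLinked K j i := fun x y hx hy ↦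
  ⟨(h y x hy hx).1.symm, by
    rw [add_comm]
    exact (h y x hy hx).1.symm.trans (h y x hy hx).2⟩

lemma PlanesLinked.map {σ : Equiv.Perm l} (h : PlanesLinked K i j)
    (hσ : planePermutation l (ZMod 2) σ ∈ K) : PlanesLinked K (σ i) (σ j) := fun x y hx hy ↦ by
  simpa only [smul_add, planePermutation_smul_inPlane] using
    And.intro ((h x y hx hy).1.smul hσ) ((h x y hx hy).2.smul hσ)

lemma form_add_inPlane_add_inPlane (hij : i ≠ j) (hx : x ≠ 0) (hy : y ≠ 0) (hxy : x ≠ y) :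
    ω (inPlane i a + inPlane j x) (inPlane i a + inPlane j y) = 1 := by
  simp [form_isAlt.self_eq_zero, form_inPlane_of_ne, hij, hij.symm,
    form_inPlane_eq_one j hx hy hxy]

lemma Linked.inPlane_of_add (hij : i ≠ j) (hx : x ≠ 0) (hy : y ≠ 0) (hxy : x ≠ y)
    (h : Linked K (inPlane i a + inPlane j x) (inPlane i a + inPlane j y)) :
    Linked K (inPlane i a + inPlane j x) (inPlane j (x + y)) := by
  have := h.trans (h.add (form_add_inPlane_add_inPlane hij hx hy hxy))
  rwa [add_add_add_comm, ZModModule.add_self, zero_add, ← map_add] at this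

lemma exists_ne_add_eq (hx : x ≠ 0) :
    ∃ y z, y ≠ 0 ∧ z ≠ 0 ∧ y ≠ z ∧ y + z = x := by
  decide +revert

lemma PlanesLinked.of_linked_add (hij : i ≠ j) (hi : planeRotation i ∈ K)
    (hj : planeRotation j ∈ K) (ha : a ≠ 0) (hb : b ≠ 0)
    (h : Linked K (inPlane i a) (inPlane i a + inPlane j b)) : PlanesLinked K i j := by
  have linked_add {x y} (hx : x ≠ 0) (hy : y ≠ 0) :
      Linked K (inPlane i x) (inPlane i x + inPlane j y) := by
    obtain ⟨g, hg, g_a, g_fix⟩ := exists_mem_rotate hi ha hx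
    obtain ⟨g', hg', g'_b, g'_fix⟩ := exists_mem_rotate hj hb hy
    simpa only [smul_add, g_a, g_fix j hij.symm, g'_b, g'_fix i hij] using (h.smul hg).smul hg'
  refine fun x y hx hy ↦ ⟨?_, linked_add hx hy⟩
  obtain ⟨u, v, hu, hv, huv, rfl⟩ := exists_ne_add_eq hy
  exact (linked_add hx hu).trans <|
    .inPlane_of_add hij hu hv huv ((linked_add hx hu).symm.trans (linked_add hx hv))

lemma PlanesLinked.of_linked_add_add (hij : i ≠ j) (hjk : j ≠ k) (hK : ∀ i, planeRotation i ∈ K)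
    (ha : a ≠ 0) (hb : b ≠ 0) (hx : x ≠ 0)
    (h : Linked K (inPlane i a + inPlane j b) (inPlane i x + inPlane k z)) :
    PlanesLinked K i j := by
  by_cases hz : z = 0
  · rw [hz, map_zero, add_zero] at h
    exact .of_linked_add hij (hK i) (hK j) ha hb ((h.trans (.of_rotation (hK i) hx ha)).symm)
  · have exists_ne : ∀ b : ZMod 2 × ZMod 2, ∃ c, c ≠ 0 ∧ b + c ≠ 0 ∧ b ≠ c := by decide
    obtain ⟨c, hc, hbc₀, hbc⟩ := exists_ne b
    obtain ⟨g, hg, g_b, g_fix⟩ := exists_mem_rotate (hK j) hb hc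
    have h' : Linked K (inPlane i a + inPlane j c) (inPlane i x + inPlane k z) := by
      simpa only [smul_add, g_b, g_fix i hij, g_fix k hjk.symm] using h.smul hg
    have := Linked.inPlane_of_add hij hb hc hbc (h.trans h'.symm)
    have hb_link := this.trans (.of_rotation (hK j) hbc₀ hb)
    rw [add_comm] at hb_link
    exact (PlanesLinked.of_linked_add hij.symm (hK j) (hK i) hb ha hb_link.symm).symm

lemma form_add_inPlane_add_add_inPlane (hij : i ≠ j) (hik : i ≠ k) (hjk : j ≠ k) :
    ω (inPlane i a + inPlane j b) (inPlane i x + inPlane j y + inPlane k z) =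
      ω (inPlane i a) (inPlane i x) + ω (inPlane j b) (inPlane j y) := by
  simp [form_inPlane_of_ne, hij, hij.symm, hik, hjk]

lemma PlanesLinked.of_linked_of_form_eq_zero (hij : i ≠ j) (hik : i ≠ k) (hjk : j ≠ k)
    (hK : ∀ i, planeRotation i ∈ K) (ha : a ≠ 0) (hb : b ≠ 0)
    (h : Linked K (inPlane i a + inPlane j b) (inPlane i x + inPlane j y + inPlane k z))
    (hx : ω (inPlane i a) (inPlane i x) ≠ 0) (hy : ω (inPlane j b) (inPlane j y) = 0) :
    PlanesLinked K i j := by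
  rw [Ne, form_inPlane_eq_zero_iff i ha, not_or] at hx
  rcases (form_inPlane_eq_zero_iff j hb).1 hy with rfl | rfl
  · rw [map_zero, add_zero] at h
    exact .of_linked_add_add hij hjk hK ha hb hx.1 h
  · have hform : ω (inPlane i a + inPlane j y) (inPlane i x + inPlane j y + inPlane k z) = 1 := by
      rw [form_add_inPlane_add_add_inPlane hij hik hjk, form_isAlt.self_eq_zero, add_zero,
        form_inPlane_eq_one i ha hx.1 (Ne.symm hx.2)]
    have := h.trans (h.add hform)
    rw [← add_assoc, add_add_add_comm, ZModModule.add_self, add_zero, ← map_add] at this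
    refine .of_linked_add_add hij hjk hK ha hb ?_ this
    rw [Ne, add_eq_zero_iff_eq_neg, ZModModule.neg_eq_self]
    exact Ne.symm hx.2

lemma PlanesLinked.of_linked_of_form_eq_one (hij : i ≠ j) (hik : i ≠ k) (hjk : j ≠ k)
    (hK : ∀ i, planeRotation i ∈ K) (ha : a ≠ 0) (hb : b ≠ 0)
    (h : Linked K (inPlane i a + inPlane j b) (inPlane i x + inPlane j y + inPlane k z))
    (hω : ω (inPlane i a + inPlane j b) (inPlane i x + inPlane j y + inPlane k z) = 1) :
    PlanesLinked K i j := by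
  rw [form_add_inPlane_add_add_inPlane hij hik hjk] at hω
  obtain ⟨hx, hy⟩ | ⟨hx, hy⟩ : (ω (inPlane i a) (inPlane i x) ≠ 0 ∧
      ω (inPlane j b) (inPlane j y) = 0) ∨ (ω (inPlane i a) (inPlane i x) = 0 ∧
      ω (inPlane j b) (inPlane j y) ≠ 0) := by
    generalize ω (inPlane i a) (inPlane i x) = s, ω (inPlane j b) (inPlane j y) = t at hω
    clear h
    decide +revert
  · exact .of_linked_of_form_eq_zero hij hik hjk hK ha hb h hx hy
  · rw [add_comm (inPlane i a), add_comm (inPlane i x)] at h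
    exact (PlanesLinked.of_linked_of_form_eq_zero hij.symm hjk hik hK hb ha h hy hx).symm

lemma Linked.add_add_inPlane (h : ∀ i j, i ≠ j → PlanesLinked K i j) (hij : i ≠ j) (hik : i ≠ k)
    (hjk : j ≠ k) (hx : x ≠ 0) (hy : y ≠ 0) (hz : z ≠ 0) :
    Linked K (inPlane k z) (inPlane i x + inPlane j y + inPlane k z) := by
  obtain ⟨u, v, hu, hv, huv, rfl⟩ := exists_ne_add_eq hx
  have link_left : Linked K (inPlane k z) (inPlane i u + inPlane j y) :=
    ((h i k hik u z hu hz).1.symm).trans (h i j hij u y hu hy).2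
  have link_right : Linked K (inPlane k z) (inPlane i v + inPlane k z) :=
    ((h i k hik v z hv hz).1.symm).trans (h i k hik v z hv hz).2
  have hform : ω (inPlane i u + inPlane j y) (inPlane i v + inPlane k z) = 1 := by
    simp [form_inPlane_of_ne, hij.symm, hik, hjk, form_inPlane_eq_one i hu hv huv]
  have := link_right.trans ((link_left.symm.trans link_right).add hform)
  rwa [add_add_add_comm, ← map_add, ← add_assoc] at this

lemma exists_transvection_mem (hij : i ≠ j) (hik : i ≠ k) (hjk : j ≠ k)
    (h : ∀ v w, v ≠ 0 → w ≠ 0 → Linked K v w) : ∃ r ≠ 0, transvection r 1 ∈ K := by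
  have ne_zero (m : l) {v : l ⊕ l → ZMod 2} (hv : v (.inl m) = 1) : v ≠ 0 := by
    rintro rfl
    exact zero_ne_one hv
  have orthogonal (m n : l) : ω (e m) (e n) = (0 : ZMod 2) := by
    rw [form_e]
    simp [e]
  refine ⟨e i + e j + e k, ne_zero i (by simp [e, hij, hik]), ?_⟩
  have relation := seven_transvections (orthogonal i j) (orthogonal i k) (orthogonal j k)
  have six_mem := mul_mem (mul_mem
    (h (e i) (e j) (e_ne_zero i) (e_ne_zero j))
    (h (e k) (e i + e j) (e_ne_zero k) (ne_zero i (by simp [e, hij]))))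
    (h (e i + e k) (e j + e k) (ne_zero i (by simp [e, hik])) (ne_zero j (by simp [e, hjk])))
  simp only [← mul_assoc] at six_mem
  rwa [eq_inv_of_mul_eq_one_left relation, inv_mem_iff] at six_mem

theorem eq_top_of_forall_linked (hij : i ≠ j) (hik : i ≠ k) (hjk : j ≠ k)
    (h : ∀ v w, v ≠ 0 → w ≠ 0 → Linked K v w) : K = ⊤ := by
  obtain ⟨r, hr, hr_mem⟩ := exists_transvection_mem hij hik hjk h
  refine eq_top_of_forall_transvection_mem fun a c ↦ ?_
  obtain rfl | rfl : c = 0 ∨ c = 1 := by decide +revert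
  · rw [transvection_zero]
    exact one_mem K
  obtain rfl | ha := eq_or_ne a 0
  · rw [transvection_zero_left]
    exact one_mem K
  · exact (mul_mem_cancel_right hr_mem).1 (h a r ha hr)

end PlanesLinked

section Transitive

variable {K : Subgroup (symplecticGroup (Fin 3) (ZMod 2))}

lemma linked_of_planesLinked (hK : ∀ i, planeRotation i ∈ K)
    (h : ∀ i j, i ≠ j → PlanesLinked K i j) {v w : Fin 3 ⊕ Fin 3 → ZMod 2} (hv : v ≠ 0)
    (hw : w ≠ 0) : Linked K v w := by
  suffices link_base : ∀ {v}, v ≠ 0 → Linked K (inPlane 0 (1, 0)) v from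
    (link_base hv).symm.trans (link_base hw)
  clear v w hv hw
  intro v hv
  have link_plane {i : Fin 3} {x : ZMod 2 × ZMod 2} (hx : x ≠ 0) :
      Linked K (inPlane 0 (1, 0)) (inPlane i x) := by
    by_cases hi : 0 = i
    · subst hi
      exact .of_rotation (hK 0) (by decide) hx
    · exact (h 0 i hi _ x (by decide) hx).1
  have link_two {i j : Fin 3} (hij : i ≠ j) {x y : ZMod 2 × ZMod 2} (hx : x ≠ 0) (hy : y ≠ 0) :
      Linked K (inPlane 0 (1, 0)) (inPlane i x + inPlane j y) :=
    (link_plane hx).trans (h i j hij x y hx hy).2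
  obtain ⟨p, rfl⟩ := (ofPlanes _ _).surjective v
  rw [← sum_inPlane, Fin.sum_univ_three] at hv ⊢
  by_cases h0 : p 0 = 0 <;> by_cases h1 : p 1 = 0 <;> by_cases h2 : p 2 = 0 <;>
    simp only [h0, h1, h2, map_zero, add_zero, zero_add, ne_eq, not_true_eq_false] at hv ⊢
  · exact link_plane h2
  · exact link_plane h1
  · exact link_two (by decide) h1 h2
  · exact link_plane h0
  · exact link_two (by decide) h0 h2
  · exact link_two (by decide) h0 h1
  · exact (link_plane h2).trans <|
      .add_add_inPlane h (by decide) (by decide) (by decide) h0 h1 h2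

lemma planesLinked_of_mem_orbit (hK : ∀ i, planeRotation i ∈ K)
    (h : inPlane 0 (1, 0) + inPlane 1 (1, 0) ∈ orbit K (e 0 : Fin 3 ⊕ Fin 3 → ZMod 2)) :
    PlanesLinked K 0 1 := by
  obtain ⟨⟨k, hkK⟩, hk : k • (e 0 : Fin 3 ⊕ Fin 3 → ZMod 2) = _⟩ := h
  obtain ⟨q, hq⟩ := (ofPlanes _ _).surjective (k • (f 0 : Fin 3 ⊕ Fin 3 → ZMod 2))
  rw [← sum_inPlane, Fin.sum_univ_three] at hq
  have link_ef : Linked K (e 0) (f 0) := hK 0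
  have link_images := link_ef.smul hkK
  have form_images : form (Fin 3) (ZMod 2) (k • e 0) (k • f 0) = 1 := by
    rw [form_smul_smul, form_e]
    simp [f]
  rw [hk, ← hq] at link_images form_images
  exact .of_linked_of_form_eq_one (by decide) (by decide) (by decide) hK (by decide) (by decide)
    link_images form_images

theorem eq_top_of_transitive (hK : ∀ i, planeRotation i ∈ K)
    (hσ : planePermutation (Fin 3) (ZMod 2) (finRotate 3) ∈ K)
    (htrans : ∀ v ≠ 0, v ∈ orbit K (e 0 : Fin 3 ⊕ Fin 3 → ZMod 2)) : K = ⊤ := by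
  have link_zero_one : PlanesLinked K 0 1 := planesLinked_of_mem_orbit hK <| htrans _ fun h ↦ by
    simpa [inPlane_apply] using congrFun h (.inl 0)
  have link_succ (i : Fin 3) : PlanesLinked K i (i + 1) := by
    induction i using Fin.induction with
    | zero => rwa [zero_add]
    | succ i ih => simpa only [finRotate_apply, Fin.coeSucc_eq_succ] using ih.map hσ
  have all_planes (i j : Fin 3) (hij : i ≠ j) : PlanesLinked K i j := by
    obtain rfl | rfl : j = i + 1 ∨ i = j + 1 := by clear * - hij; decide +revert
    exacts [link_succ i, (link_succ j).symm]
  exact eq_top_of_forall_linked (i := 0) (j := 1) (k := 2) (by decide) (by decide) (by decide)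
    fun v w ↦ linked_of_planesLinked hK all_planes

end Transitive

/-! ### The 3-group and its orbits -/

section PlaneGroup

variable {l : Type*} [Fintype l] [DecidableEq l]

lemma planeRotation_pow_three (i : l) :
    (planeRotation i : symplecticGroup l (ZMod 2)) ^ 3 = 1 := by
  refine eq_of_forall_smul_eq fun v ↦ ?_
  obtain ⟨p, rfl⟩ := (ofPlanes _ _).surjective v
  have rotate_three : ∀ x : ZMod 2 × ZMod 2, rotate^[3] x = x := by decide
  rw [planeRotation_pow_smul_ofPlanes, rotate_three, Function.update_eq_self, one_smul]

lemma planeRotation_mul_comm {R : Type*} [CommRing R] (i j : l) :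
    (planeRotation i * planeRotation j : symplecticGroup l R) =
      planeRotation j * planeRotation i := by
  obtain rfl | hij := eq_or_ne i j
  · rfl
  refine eq_of_forall_smul_eq fun v ↦ ?_
  obtain ⟨p, rfl⟩ := (ofPlanes _ _).surjective v
  simp [mul_smul, planeRotation_smul_ofPlanes, hij, hij.symm, Function.update_comm hij]

/-- The group generated by the rotations of the hyperbolic planes and by the permutation `σ` of
them. -/
def planeGroup (R : Type*) [CommRing R] (σ : Equiv.Perm l) : Subgroup (symplecticGroup l R) :=
  Subgroup.zpowers (planePermutation l R σ) ⊔ Subgroup.closure (Set.range planeRotation)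

lemma planeRotation_mem_planeGroup {R : Type*} [CommRing R] (σ : Equiv.Perm l) (i : l) :
    planeRotation i ∈ planeGroup R σ :=
  Subgroup.mem_sup_right (Subgroup.subset_closure ⟨i, rfl⟩)

lemma planePermutation_mem_planeGroup {R : Type*} [CommRing R] (σ : Equiv.Perm l) :
    planePermutation l R σ ∈ planeGroup R σ :=
  Subgroup.mem_sup_left (Subgroup.mem_zpowers _)

lemma isPGroup_planeGroup {σ : Equiv.Perm l} (hσ : σ ^ 3 = 1) :
    IsPGroup 3 (planeGroup (ZMod 2) σ) := by
  refine IsPGroup.to_sup_of_normal_right' ?_ (isPGroup_closure ?_ ?_) ?_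
  · rw [Subgroup.zpowers_eq_closure]
    refine isPGroup_closure (by simp) ?_
    simp [← map_pow, hσ]
  · rintro _ ⟨i, rfl⟩ _ ⟨j, rfl⟩
    exact planeRotation_mul_comm i j
  · rintro _ ⟨i, rfl⟩
    exact planeRotation_pow_three i
  · refine Subgroup.le_normalizer_closure_iff.2 ?_
    rintro _ ⟨n, rfl⟩ _ ⟨i, rfl⟩
    dsimp only
    rw [← map_zpow, conj_planeRotation]
    exact Subgroup.subset_closure ⟨_, rfl⟩

variable {K : Subgroup (symplecticGroup l (ZMod 2))}

lemma mem_orbit_of_forall_eq_zero_iff (hK : ∀ i, planeRotation i ∈ K)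
    {p q : l → ZMod 2 × ZMod 2} (hpq : ∀ i, p i = 0 ↔ q i = 0) :
    ofPlanes l (ZMod 2) q ∈ orbit K (ofPlanes l (ZMod 2) p) := by
  suffices h : ∀ s : Finset l, ofPlanes l (ZMod 2) (s.piecewise q p) ∈
      orbit K (ofPlanes l (ZMod 2) p) by
    simpa using h Finset.univ
  intro s
  induction s using Finset.induction_on with
  | empty => simp
  | insert i s hi ih =>
    obtain ⟨n, hn⟩ : ∃ n, rotate^[n] (p i) = q i := by
      by_cases hp : p i = 0
      · exact ⟨0, hp.trans ((hpq i).1 hp).symm⟩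
      · exact exists_iterate_rotate_eq hp (mt (hpq i).2 hp)
    have := mem_orbit_of_mem_orbit (⟨_, pow_mem (hK i) n⟩ : K) ih
    rwa [Subgroup.smul_def, planeRotation_pow_smul_ofPlanes, Finset.piecewise_eq_of_notMem _ _ _ hi,
      hn, ← Finset.piecewise_insert] at this

/-- The number of hyperbolic planes in which `v` has a nonzero component. -/
def planeWeight (v : l ⊕ l → ZMod 2) : ℕ :=
  hammingNorm ((ofPlanes l (ZMod 2)).symm v)

lemma card_planeWeight_eq (l : Type*) [Fintype l] [DecidableEq l] (k : ℕ) :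
    Finset.card {v : l ⊕ l → ZMod 2 | planeWeight v = k} = (Fintype.card l).choose k * 3 ^ k := by
  rw [show 3 = Fintype.card (ZMod 2 × ZMod 2) - 1 from rfl, ← card_hammingNorm_eq l]
  exact Finset.card_equiv (ofPlanes l (ZMod 2)).symm.toEquiv fun v ↦ by
    rw [Finset.mem_filter_univ, Finset.mem_filter_univ]
    rfl

lemma planeWeight_e (i : l) : planeWeight (e i) = 1 := by
  have he : ofPlanes l (ZMod 2) (Pi.single i (1, 0)) = e i := by
    simp [← inPlane_apply, inPlane_eq_add]
  rw [planeWeight, ← he, LinearEquiv.symm_apply_apply, hammingNorm, Finset.card_eq_one]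
  exact ⟨i, by ext j; simp [Pi.single_apply]⟩

end PlaneGroup

section Orbits

variable {K : Subgroup (symplecticGroup (Fin 3) (ZMod 2))}

lemma mem_orbit_of_planeWeight_eq (hK : ∀ i, planeRotation i ∈ K)
    (hσ : planePermutation (Fin 3) (ZMod 2) (finRotate 3) ∈ K)
    {v w : Fin 3 ⊕ Fin 3 → ZMod 2} (hvw : planeWeight v = planeWeight w) : w ∈ orbit K v := by
  obtain ⟨p, rfl⟩ := (ofPlanes _ _).surjective v
  obtain ⟨q, rfl⟩ := (ofPlanes _ _).surjective w
  simp only [planeWeight, LinearEquiv.symm_apply_apply] at hvw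
  have shift_support : ∀ s t : Finset (Fin 3), s.card = t.card →
      ∃ n : Fin 3, ∀ i, (finRotate 3 ^ (n : ℕ))⁻¹ i ∈ s ↔ i ∈ t := by decide
  obtain ⟨n, hn⟩ := shift_support {i | p i ≠ 0} {i | q i ≠ 0} hvw
  have shift_mem : planePermutation (Fin 3) (ZMod 2) (finRotate 3 ^ (n : ℕ)) ∈ K := by
    rw [map_pow]
    exact pow_mem hσ n
  have shifted := mem_orbit (ofPlanes (Fin 3) (ZMod 2) p) (⟨_, shift_mem⟩ : K)
  rw [Subgroup.smul_def, planePermutation_smul_ofPlanes] at shifted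
  rw [← orbit_eq_iff.2 shifted]
  refine mem_orbit_of_forall_eq_zero_iff hK fun i ↦ ?_
  simpa [not_iff_not] using hn i

lemma exists_weights_orbit (hK : ∀ i, planeRotation i ∈ K)
    (hσ : planePermutation (Fin 3) (ZMod 2) (finRotate 3) ∈ K) (v : Fin 3 ⊕ Fin 3 → ZMod 2) :
    ∃ S ⊆ Finset.range 4, (∀ w, w ∈ orbit K v ↔ planeWeight w ∈ S) ∧
      Nat.card (orbit K v) = ∑ k ∈ S, Nat.choose 3 k * 3 ^ k := by
  classical
  have mem_iff (w) : w ∈ orbit K v ↔ planeWeight w ∈ (orbit K v).toFinset.image planeWeight := by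
    simp only [Finset.mem_image, Set.mem_toFinset]
    refine ⟨fun hw ↦ ⟨w, hw, rfl⟩, fun ⟨u, hu, huw⟩ ↦ ?_⟩
    exact orbit_eq_iff.2 hu ▸ mem_orbit_of_planeWeight_eq hK hσ huw
  refine ⟨_, Finset.image_subset_iff.2 fun w _ ↦ Finset.mem_range_succ_iff.2
    hammingNorm_le_card_fintype, mem_iff, ?_⟩
  rw [Nat.card_eq_card_toFinset, Finset.card_eq_sum_card_image planeWeight]
  refine Finset.sum_congr rfl fun k hk ↦ ?_
  refine Eq.trans (congrArg Finset.card ?_) (card_planeWeight_eq (Fin 3) k)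
  ext w
  simp only [Finset.mem_filter, Finset.mem_univ, true_and, Set.mem_toFinset]
  refine and_iff_right_of_imp ?_
  rintro rfl
  exact (mem_iff w).2 hk

lemma mem_orbit_of_fixedPointFree (hK : ∀ i, planeRotation i ∈ K)
    (hσ : planePermutation (Fin 3) (ZMod 2) (finRotate 3) ∈ K)
    {y : symplecticGroup (Fin 3) (ZMod 2)} (hy : y ∈ K) (hpow : y ^ 7 = 1)
    (hfix : ∀ v : Fin 3 ⊕ Fin 3 → ZMod 2, y • v = v → v = 0)
    {v : Fin 3 ⊕ Fin 3 → ZMod 2} (hv : v ≠ 0) : v ∈ orbit K (e 0 : Fin 3 ⊕ Fin 3 → ZMod 2) := by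
  have : Fact (Nat.Prime 7) := ⟨by norm_num⟩
  obtain ⟨weights, weights_subset, mem_iff, card_eq⟩ := exists_weights_orbit hK hσ (e 0)
  have one_mem_weights : 1 ∈ weights := by
    rw [← planeWeight_e (0 : Fin 3), ← mem_iff]
    exact mem_orbit_self _
  have zero_notMem : (0 : Fin 3 ⊕ Fin 3 → ZMod 2) ∉ orbit K (e 0) := by
    rintro ⟨k, hk⟩
    exact e_ne_zero 0 ((smul_eq_zero_iff_eq k).1 hk)
  have seven_dvd : 7 ∣ ∑ k ∈ weights, Nat.choose 3 k * 3 ^ k := by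
    rw [← card_eq]
    exact dvd_card_orbit hy hpow fun z hz hyz ↦ zero_notMem (hfix z hyz ▸ hz)
  have weights_eq : ∀ S ⊆ Finset.range 4, 1 ∈ S →
      7 ∣ ∑ k ∈ S, Nat.choose 3 k * 3 ^ k → S = {1, 2, 3} := by
    decide
  have weight_pos : planeWeight v ≠ 0 := by simpa [planeWeight] using hv
  have weight_le : planeWeight v ≤ 3 := hammingNorm_le_card_fintype
  rw [mem_iff, weights_eq weights weights_subset one_mem_weights seven_dvd]
  simp only [Finset.mem_insert, Finset.mem_singleton]
  omega

end Orbits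

/-! ### The element of order 7 -/

/-- The companion matrix of `X³ + X + 1`, a generator of the multiplicative group of `𝔽₈` acting on
`𝔽₈ = 𝔽₂³`. -/
def singerCycle : GL (Fin 3) (ZMod 2) where
  val := !![0, 0, 1; 1, 0, 1; 0, 1, 0]
  inv := !![1, 1, 0; 0, 0, 1; 1, 0, 0]
  val_inv := by decide
  inv_val := by decide

lemma singerCycle_pow_seven : singerCycle ^ 7 = 1 := Units.ext (by decide)

lemma eq_zero_of_mulVec_eq_self {l F : Type*} [Fintype l] [DecidableEq l] [Field F]
    {A : Matrix l l F} (hA : (A - 1).det ≠ 0) {v : l → F} (hv : A *ᵥ v = v) : v = 0 :=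
  eq_zero_of_mulVec_eq_zero hA (by rw [sub_mulVec, hv, one_mulVec, sub_self])

lemma eq_zero_of_levi_smul_eq_self {l F : Type*} [Fintype l] [DecidableEq l] [Field F]
    {A : GL l F} (hA : ((A : Matrix l l F) - 1).det ≠ 0) {v : l ⊕ l → F}
    (hv : levi l F A • v = v) : v = 0 := by
  rw [levi_smul] at hv
  have inl_fixed : (A : Matrix l l F) *ᵥ (v ∘ .inl) = v ∘ .inl := congrArg (· ∘ Sum.inl) hv
  have inr_fixed : (A : Matrix l l F)ᵀ *ᵥ (v ∘ .inr) = v ∘ .inr := by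
    have := congrArg (fun w ↦ (A : Matrix l l F)ᵀ *ᵥ (w ∘ Sum.inr)) hv
    simpa [← transpose_mul] using this.symm
  have inl_zero := eq_zero_of_mulVec_eq_self hA inl_fixed
  have inr_zero := eq_zero_of_mulVec_eq_self (by rwa [← transpose_one, ← transpose_sub,
    det_transpose]) inr_fixed
  ext (i | i)
  exacts [congrFun inl_zero i, congrFun inr_zero i]

lemma eq_zero_of_levi_singerCycle_smul_eq_self {v : Fin 3 ⊕ Fin 3 → ZMod 2}
    (hv : levi _ _ singerCycle • v = v) : v = 0 :=
  eq_zero_of_levi_smul_eq_self (by rw [singerCycle, det_fin_three]; decide) hv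

lemma orderOf_levi_singerCycle : orderOf (levi _ _ singerCycle) = 7 := by
  have : Fact (Nat.Prime 7) := ⟨by norm_num⟩
  refine orderOf_eq_prime (by rw [← map_pow, singerCycle_pow_seven, map_one]) fun h ↦ ?_
  have := eq_zero_of_levi_singerCycle_smul_eq_self (v := e 0) (by rw [h, one_smul])
  exact e_ne_zero 0 this

theorem closure_planeGroup_union_eq_top {k : symplecticGroup (Fin 3) (ZMod 2)}
    {P : Subgroup (symplecticGroup (Fin 3) (ZMod 2))} (hP : planeGroup (ZMod 2) (finRotate 3) ≤ P) :
    Subgroup.closure (P ∪ {k * levi _ _ singerCycle * k⁻¹}) = ⊤ := by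
  set K := Subgroup.closure (P ∪ {k * levi _ _ singerCycle * k⁻¹})
  have hPK : P ≤ K := fun z hz ↦ Subgroup.subset_closure (.inl hz)
  have hK (i : Fin 3) : planeRotation i ∈ K := hPK (hP (planeRotation_mem_planeGroup _ i))
  have hσ := hPK (hP (planePermutation_mem_planeGroup _))
  refine eq_top_of_transitive hK hσ fun v hv ↦
    mem_orbit_of_fixedPointFree hK hσ (Subgroup.subset_closure (.inr rfl)) ?_ ?_ hv
  · rw [conj_pow, ← orderOf_levi_singerCycle, pow_orderOf_eq_one, mul_one, mul_inv_cancel]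
  · intro w hw
    rw [mul_smul, mul_smul, ← eq_inv_smul_iff] at hw
    exact (smul_eq_zero_iff_eq _).1 (eq_zero_of_levi_singerCycle_smul_eq_self hw)

end InvariableGeneration

open InvariableGeneration

/-- `Sp_6(𝔽₂)` is generated invariably by a Sylow `3`-subgroup and an element of
order `7`. -/
theorem Sp6_F2_invariable_generation :
    ∃ P : Subgroup (Matrix.symplecticGroup (Fin 3) (ZMod 2)),
      IsPGroup 3 P ∧ Nat.Coprime P.index 3 ∧
      ∃ x : Matrix.symplecticGroup (Fin 3) (ZMod 2), orderOf x = 7 ∧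
        ∀ g h : Matrix.symplecticGroup (Fin 3) (ZMod 2),
          Subgroup.closure
            ({z | ∃ a ∈ P, z = g⁻¹ * a * g} ∪ {h⁻¹ * x * h}) = ⊤ := by
  have rot_isPGroup : IsPGroup 3 (planeGroup (ZMod 2) (finRotate 3)) :=
    isPGroup_planeGroup (by decide)
  obtain ⟨P, hP⟩ := rot_isPGroup.exists_le_sylow
  have index_coprime : Nat.Coprime P.index 3 :=
    ((Nat.Prime.coprime_iff_not_dvd Nat.prime_three).2 P.not_dvd_index).symm
  exact ⟨P, P.isPGroup', index_coprime, levi _ _ singerCycle, orderOf_levi_singerCycle,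
    closure_conj_eq_top fun k ↦ closure_planeGroup_union_eq_top hP⟩
end
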